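/- arXiv:2205.00128 — 5 statements merged into one kernel-verified Lean document; each statement's English description precedes it below -/
import Mathlib

section
/- For every integer n ≥ 2 and every real λ with −2/√(n+2) < λ < 0, there exist a real number x̂ with −λ < x̂ < (−λ + √(λ² + 4n))/2, a real ŝ > 0, and C¹ functions x, r, θ : [0, ŝ] → ℝ such that: x'(s) = cos θ(s) and r'(s) = sin θ(s) on [0, ŝ]; θ'(s) = ((n−1)/r(s) − r(s))·cos θ(s) + x(s)·sin θ(s) + λ on (0, ŝ]; x(0) = x̂, r(0) = 0, θ(0) = π/2; x(ŝ) = 0, θ(ŝ) = π; r(s) > 0 for s ∈ (0, ŝ]; x(s) > 0 for s ∈ [0, ŝ); θ is strictly increasing on [0, ŝ] (so π/2 ≤ θ(s) ≤ π and cos θ(s) < 0 on (0, ŝ]). -/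
open Real Set

/-!
# A compact convex `λ`-hypersurface of revolution

Profile curves leaving the axis perpendicularly form a one-parameter family, indexed by the
curvature `m` on the axis. The equation is singular there; writing `θ = π / 2 + s ψ` turns it into
the fixed-point equation of a Volterra operator, which gives solutions depending continuously
on `m`. Along each of them `θ` increases until either `x` vanishes or `θ` reaches `π`.

Write `κ` and `μ = -cos θ / r` for the two principal curvatures. The quantity `q = sin θ - x μ`
satisfies `(r ^ (k + 1) (κ - μ))' = r ^ (k + 2) κ q` and `q' = -(x sin θ - r cos θ) (κ - μ) / r`,
where `n = k + 1`. When `m` is slightly below the curvature of the round sphere, `λ > -2 / √(n + 2)`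
keeps `q` positive, and as `q ≤ 0` where `θ = π` and `x ≥ 0`, the function `x` vanishes first. When
`m` is small, the curve runs far out almost parallel to the `r`-axis and then turns quickly, so `θ`
reaches `π` first; here `λ < 0` keeps the curve away from the `r`-axis. By connectedness of the
range of `m`, some curve has `x = 0` and `θ = π` simultaneously.
-/

open Filter Topology

/-! ### One-variable calculus -/

lemma monotoneOn_Icc_of_hasDerivAt_nonneg {f f' : ℝ → ℝ} {a b : ℝ}
    (hf : ContinuousOn f (Icc a b)) (hf' : ∀ s ∈ Ioo a b, HasDerivAt f (f' s) s)
    (h : ∀ s ∈ Ioo a b, 0 ≤ f' s) : MonotoneOn f (Icc a b) := by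
  rw [← interior_Icc] at hf' h
  exact monotoneOn_of_hasDerivWithinAt_nonneg (convex_Icc a b) hf
    (fun s hs => (hf' s hs).hasDerivWithinAt) h

lemma strictMonoOn_Icc_of_hasDerivAt_pos {f f' : ℝ → ℝ} {a b : ℝ}
    (hf : ContinuousOn f (Icc a b)) (hf' : ∀ s ∈ Ioo a b, HasDerivAt f (f' s) s)
    (h : ∀ s ∈ Ioo a b, 0 < f' s) : StrictMonoOn f (Icc a b) := by
  rw [← interior_Icc] at hf' h
  exact strictMonoOn_of_hasDerivWithinAt_pos (convex_Icc a b) hf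
    (fun s hs => (hf' s hs).hasDerivWithinAt) h

lemma contDiffOn_one_Icc_of_hasDerivAt {f f' : ℝ → ℝ} {a b : ℝ} (hab : a < b)
    (hf : ∀ s ∈ Icc a b, HasDerivAt f (f' s) s) (hf' : ContinuousOn f' (Icc a b)) :
    ContDiffOn ℝ 1 f (Icc a b) := by
  rw [contDiffOn_one_iff_derivWithin (uniqueDiffOn_Icc hab)]
  exact ⟨fun s hs => (hf s hs).differentiableAt.differentiableWithinAt,
    hf'.congr fun s hs => (hf s hs).hasDerivWithinAt.derivWithin (uniqueDiffOn_Icc hab s hs)⟩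

lemma exists_first_zero {f : ℝ → ℝ} {a b : ℝ} (hab : a ≤ b) (hf : ContinuousOn f (Icc a b))
    (ha : 0 < f a) (hb : f b ≤ 0) :
    ∃ t ∈ Ioc a b, f t = 0 ∧ ∀ s ∈ Ico a t, 0 < f s := by
  have hclosed : IsClosed (Icc a b ∩ f ⁻¹' Iic 0) :=
    hf.preimage_isClosed_of_isClosed isClosed_Icc isClosed_Iic
  obtain ⟨t, ⟨htI, htle⟩, hmin⟩ := (isCompact_Icc.of_isClosed_subset hclosed
    inter_subset_left).exists_isLeast ⟨b, ⟨hab, le_rfl⟩, hb⟩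
  have hpos : ∀ s ∈ Ico a t, 0 < f s := fun s hs => by
    by_contra! hle
    exact hs.2.not_ge (hmin ⟨⟨hs.1, hs.2.le.trans htI.2⟩, hle⟩)
  have hat : a < t := htI.1.lt_of_ne fun h => ha.not_ge (h ▸ htle)
  have hge : 0 ≤ f t := by
    refine continuousWithinAt_const.closure_le (s := Ico a t) ?_
      ((hf t htI).mono fun s hs => ⟨hs.1, hs.2.le.trans htI.2⟩) fun s hs => (hpos s hs).le
    rw [closure_Ico hat.ne]
    exact right_mem_Icc.2 hat.le
  exact ⟨t, ⟨hat, htI.2⟩, le_antisymm htle hge, hpos⟩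

lemma pos_of_forall_pos_before {f : ℝ → ℝ} {a b : ℝ} (hf : ContinuousOn f (Icc a b))
    (ha : 0 < f a) (h : ∀ t ∈ Ioc a b, (∀ s ∈ Ico a t, 0 < f s) → 0 < f t) :
    ∀ s ∈ Icc a b, 0 < f s := by
  by_contra! hcon
  obtain ⟨s, hs, hfs⟩ := hcon
  obtain ⟨t, ht, hft, hpos⟩ :=
    exists_first_zero hs.1 (hf.mono (Icc_subset_Icc_right hs.2)) ha hfs
  exact (h t ⟨ht.1, ht.2.trans hs.2⟩ hpos).ne' hft

lemma eventually_nhdsGT_zero_lt {f : ℝ → ℝ} (hf : Continuous f) (hf₀ : f 0 = 0) {b : ℝ}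
    (hb : 0 < b) : ∀ᶠ t in 𝓝[>] 0, f t < b :=
  nhdsWithin_le_nhds ((hf.tendsto' 0 0 hf₀).eventually_lt_const hb)

/-! ### Profile curves -/

/-- A curve `s ↦ (x s, r s)` with tangent angle `θ s`, generating a rotation hypersurface with
rotational principal curvature `μ s`. The curvature is part of the data because its formula
`μ = -cos θ / r` is meaningless on the axis `r = 0`. -/
structure ProfileCurve where
  x : ℝ → ℝ
  r : ℝ → ℝ
  θ : ℝ → ℝ
  μ : ℝ → ℝ

namespace ProfileCurve

variable (γ : ProfileCurve) (k : ℕ) (lam m S : ℝ)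

/-- The leftward component `-cos θ` of the unit tangent `(-c, σ)`. -/
noncomputable def c (s : ℝ) : ℝ := -cos (γ.θ s)

/-- The radial component `sin θ` of the unit tangent `(-c, σ)`. -/
noncomputable def σ (s : ℝ) : ℝ := sin (γ.θ s)

/-- The curvature of the profile prescribed by the `λ`-hypersurface equation in dimension
`n = k + 1`. -/
noncomputable def κ (s : ℝ) : ℝ := γ.x s * γ.σ s + γ.r s * γ.c s + lam - k * γ.μ s

/-- The quotient `⟨X, T⟩ / r` of the tangential part of the position vector by the radius, written
so as to make sense on the axis. -/
noncomputable def q (s : ℝ) : ℝ := γ.σ s - γ.x s * γ.μ s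

/-- `γ` solves the rotational `λ`-hypersurface system of dimension `n = k + 1` on `[0, S]`, leaves
the axis perpendicularly with curvature `m > 0`, and has not turned beyond `θ = π`. The initial
abscissa is the one for which the system forces the curvature `m` on the axis. -/
structure IsArc : Prop where
  length_pos : 0 < S
  curvature_pos : 0 < m
  hasDerivAt_x : ∀ s ∈ Icc 0 S, HasDerivAt γ.x (-γ.c s) s
  hasDerivAt_r : ∀ s ∈ Icc 0 S, HasDerivAt γ.r (γ.σ s) s
  hasDerivAt_θ : ∀ s ∈ Icc 0 S, HasDerivAt γ.θ (γ.κ k lam s) s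
  continuousOn_μ : ContinuousOn γ.μ (Icc 0 S)
  c_eq : ∀ s ∈ Icc 0 S, γ.c s = γ.r s * γ.μ s
  x_zero : γ.x 0 = (k + 1) * m - lam
  r_zero : γ.r 0 = 0
  θ_zero : γ.θ 0 = π / 2
  μ_zero : γ.μ 0 = m
  r_pos : ∀ s ∈ Ioc 0 S, 0 < γ.r s
  θ_le : ∀ s ∈ Icc 0 S, γ.θ s ≤ π

variable {γ}

lemma c_sq_add_σ_sq (s : ℝ) : γ.c s ^ 2 + γ.σ s ^ 2 = 1 := by
  simp only [c, σ, neg_sq, cos_sq_add_sin_sq]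

lemma σ_le_one (s : ℝ) : γ.σ s ≤ 1 := sin_le_one _

namespace IsArc

variable {k lam m S} {s : ℝ}

lemma restrict (h : γ.IsArc k lam m S) {t : ℝ} (ht : t ∈ Ioc 0 S) : γ.IsArc k lam m t where
  length_pos := ht.1
  curvature_pos := h.curvature_pos
  hasDerivAt_x s hs := h.hasDerivAt_x s ⟨hs.1, hs.2.trans ht.2⟩
  hasDerivAt_r s hs := h.hasDerivAt_r s ⟨hs.1, hs.2.trans ht.2⟩
  hasDerivAt_θ s hs := h.hasDerivAt_θ s ⟨hs.1, hs.2.trans ht.2⟩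
  continuousOn_μ := h.continuousOn_μ.mono (Icc_subset_Icc_right ht.2)
  c_eq s hs := h.c_eq s ⟨hs.1, hs.2.trans ht.2⟩
  x_zero := h.x_zero
  r_zero := h.r_zero
  θ_zero := h.θ_zero
  μ_zero := h.μ_zero
  r_pos s hs := h.r_pos s ⟨hs.1, hs.2.trans ht.2⟩
  θ_le s hs := h.θ_le s ⟨hs.1, hs.2.trans ht.2⟩

lemma left_mem (h : γ.IsArc k lam m S) : 0 ∈ Icc 0 S := left_mem_Icc.2 h.length_pos.le

lemma right_mem (h : γ.IsArc k lam m S) : S ∈ Icc 0 S := right_mem_Icc.2 h.length_pos.le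

lemma hasDerivAt_c (h : γ.IsArc k lam m S) (hs : s ∈ Icc 0 S) :
    HasDerivAt γ.c (γ.σ s * γ.κ k lam s) s :=
  (h.hasDerivAt_θ s hs).cos.neg.congr_deriv (by rw [σ]; ring)

lemma hasDerivAt_σ (h : γ.IsArc k lam m S) (hs : s ∈ Icc 0 S) :
    HasDerivAt γ.σ (-γ.c s * γ.κ k lam s) s :=
  (h.hasDerivAt_θ s hs).sin.congr_deriv (by rw [c]; ring)

lemma continuousOn_x (h : γ.IsArc k lam m S) : ContinuousOn γ.x (Icc 0 S) :=
  fun s hs => (h.hasDerivAt_x s hs).continuousAt.continuousWithinAt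

lemma continuousOn_r (h : γ.IsArc k lam m S) : ContinuousOn γ.r (Icc 0 S) :=
  fun s hs => (h.hasDerivAt_r s hs).continuousAt.continuousWithinAt

lemma continuousOn_θ (h : γ.IsArc k lam m S) : ContinuousOn γ.θ (Icc 0 S) :=
  fun s hs => (h.hasDerivAt_θ s hs).continuousAt.continuousWithinAt

lemma continuousOn_c (h : γ.IsArc k lam m S) : ContinuousOn γ.c (Icc 0 S) :=
  fun _ hs => (h.hasDerivAt_c hs).continuousAt.continuousWithinAt

lemma continuousOn_σ (h : γ.IsArc k lam m S) : ContinuousOn γ.σ (Icc 0 S) :=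
  fun _ hs => (h.hasDerivAt_σ hs).continuousAt.continuousWithinAt

lemma continuousOn_κ (h : γ.IsArc k lam m S) : ContinuousOn (γ.κ k lam) (Icc 0 S) :=
  (((h.continuousOn_x.mul h.continuousOn_σ).add (h.continuousOn_r.mul h.continuousOn_c)).add
    continuousOn_const).sub (continuousOn_const.mul h.continuousOn_μ)

lemma continuousOn_q (h : γ.IsArc k lam m S) : ContinuousOn γ.q (Icc 0 S) :=
  h.continuousOn_σ.sub (h.continuousOn_x.mul h.continuousOn_μ)

lemma r_nonneg (h : γ.IsArc k lam m S) (hs : s ∈ Icc 0 S) : 0 ≤ γ.r s := by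
  rcases hs.1.eq_or_lt with rfl | hpos
  · exact h.r_zero.ge
  · exact (h.r_pos s ⟨hpos, hs.2⟩).le

lemma σ_zero (h : γ.IsArc k lam m S) : γ.σ 0 = 1 := by rw [σ, h.θ_zero, sin_pi_div_two]

lemma c_zero (h : γ.IsArc k lam m S) : γ.c 0 = 0 := by
  rw [c, h.θ_zero, cos_pi_div_two, neg_zero]

lemma κ_zero (h : γ.IsArc k lam m S) : γ.κ k lam 0 = m := by
  rw [κ, h.x_zero, h.r_zero, h.μ_zero, h.σ_zero]
  ring

lemma hasDerivAt_μ (h : γ.IsArc k lam m S) (hs : s ∈ Ioo 0 S) :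
    HasDerivAt γ.μ (γ.σ s / γ.r s * (γ.κ k lam s - γ.μ s)) s := by
  have hsI := Ioo_subset_Icc_self hs
  have hr := h.r_pos s ⟨hs.1, hs.2.le⟩
  have hμ : γ.μ =ᶠ[nhds s] γ.c / γ.r := by
    filter_upwards [Ioo_mem_nhds hs.1 hs.2] with t ht
    rw [Pi.div_apply, h.c_eq t (Ioo_subset_Icc_self ht),
      mul_div_cancel_left₀ _ (h.r_pos t ⟨ht.1, ht.2.le⟩).ne']
  refine (((h.hasDerivAt_c hsI).div (h.hasDerivAt_r s hsI) hr.ne').congr_of_eventuallyEq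
    hμ).congr_deriv ?_
  rw [h.c_eq s hsI]
  field_simp

lemma hasDerivAt_κ (h : γ.IsArc k lam m S) (hs : s ∈ Ioo 0 S) :
    HasDerivAt (γ.κ k lam) (γ.κ k lam s * (γ.r s * γ.σ s - γ.x s * γ.c s)
      - k * (γ.σ s / γ.r s * (γ.κ k lam s - γ.μ s))) s := by
  have hsI := Ioo_subset_Icc_self hs
  exact (((((h.hasDerivAt_x s hsI).mul (h.hasDerivAt_σ hsI)).add
    ((h.hasDerivAt_r s hsI).mul (h.hasDerivAt_c hsI))).add_const lam).sub
    ((h.hasDerivAt_μ hs).const_mul (k : ℝ))).congr_deriv (by ring)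

lemma hasDerivAt_q (h : γ.IsArc k lam m S) (hs : s ∈ Ioo 0 S) :
    HasDerivAt γ.q
      (-((γ.x s * γ.σ s + γ.r s * γ.c s) * (γ.κ k lam s - γ.μ s) / γ.r s)) s := by
  have hsI := Ioo_subset_Icc_self hs
  have hr := h.r_pos s ⟨hs.1, hs.2.le⟩
  refine ((h.hasDerivAt_σ hsI).sub
    ((h.hasDerivAt_x s hsI).mul (h.hasDerivAt_μ hs))).congr_deriv ?_
  rw [h.c_eq s hsI]
  field_simp
  ring

lemma hasDerivAt_r_pow_mul_κ_sub_μ (h : γ.IsArc k lam m S) (hs : s ∈ Ioo 0 S) :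
    HasDerivAt (fun s => γ.r s ^ (k + 1) * (γ.κ k lam s - γ.μ s))
      (γ.r s ^ (k + 2) * γ.κ k lam s * γ.q s) s := by
  have hsI := Ioo_subset_Icc_self hs
  have hr := h.r_pos s ⟨hs.1, hs.2.le⟩
  refine (((h.hasDerivAt_r s hsI).fun_pow (k + 1)).mul
    ((h.hasDerivAt_κ hs).sub (h.hasDerivAt_μ hs))).congr_deriv ?_
  simp only [Nat.add_sub_cancel, Pi.sub_apply, q]
  rw [h.c_eq s hsI]
  push_cast
  field_simp
  ring

/-! ### Convexity -/

/- The linear terms of `κ'` are absorbed by the integrating factor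
`r ^ k * exp (-(x ^ 2 + r ^ 2) / 2)`; what remains is the nonnegative term `k σ μ / r`. -/
lemma monotoneOn_κ_mul_integratingFactor (h : γ.IsArc k lam m S)
    (hσ : ∀ s ∈ Ioo 0 S, 0 ≤ γ.σ s) (hμ : ∀ s ∈ Ioo 0 S, 0 ≤ γ.μ s) :
    MonotoneOn (fun s => γ.κ k lam s * (γ.r s ^ k * exp (-(γ.x s ^ 2 + γ.r s ^ 2) / 2)))
      (Icc 0 S) := by
  refine monotoneOn_Icc_of_hasDerivAt_nonneg
    (f' := fun s => k * (γ.σ s / γ.r s) * γ.μ s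
      * (γ.r s ^ k * exp (-(γ.x s ^ 2 + γ.r s ^ 2) / 2))) ?_ (fun s hs => ?_) fun s hs => ?_
  · have hx := h.continuousOn_x
    have hr := h.continuousOn_r
    exact h.continuousOn_κ.mul (by fun_prop)
  · have hsI := Ioo_subset_Icc_self hs
    have hr := (h.r_pos s ⟨hs.1, hs.2.le⟩).ne'
    refine ((h.hasDerivAt_κ hs).fun_mul (((h.hasDerivAt_r s hsI).fun_pow k).fun_mul
      (((((h.hasDerivAt_x s hsI).fun_pow 2).fun_add
        ((h.hasDerivAt_r s hsI).fun_pow 2)).fun_neg.div_const 2).exp))).congr_deriv ?_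
    rcases k with _ | k
    · simp only [CharP.cast_eq_zero, pow_zero]
      ring
    · simp only [Nat.add_sub_cancel]
      push_cast
      field_simp
      ring
  · have hr := h.r_pos s ⟨hs.1, hs.2.le⟩
    have := hσ s hs
    have := hμ s hs
    positivity

lemma pi_div_two_lt_θ_of_κ_pos (h : γ.IsArc k lam m S) (hκ : ∀ s ∈ Ioo 0 S, 0 < γ.κ k lam s)
    (hs : s ∈ Ioc 0 S) : π / 2 < γ.θ s := by
  rw [← h.θ_zero]
  exact strictMonoOn_Icc_of_hasDerivAt_pos h.continuousOn_θ
    (fun s hs => h.hasDerivAt_θ s (Ioo_subset_Icc_self hs)) hκ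
    h.left_mem (Ioc_subset_Icc_self hs) hs.1

lemma c_pos_of_pi_div_two_lt_θ (h : γ.IsArc k lam m S) (hs : s ∈ Icc 0 S) (hθ : π / 2 < γ.θ s) :
    0 < γ.c s :=
  neg_pos.2 (cos_neg_of_pi_div_two_lt_of_lt hθ (by linarith [h.θ_le s hs, pi_pos]))

lemma σ_nonneg_of_pi_div_two_le_θ (h : γ.IsArc k lam m S) (hs : s ∈ Icc 0 S)
    (hθ : π / 2 ≤ γ.θ s) : 0 ≤ γ.σ s :=
  sin_nonneg_of_nonneg_of_le_pi (by linarith [pi_pos]) (h.θ_le s hs)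

lemma μ_pos_of_c_pos (h : γ.IsArc k lam m S) (hs : s ∈ Icc 0 S) (hc : 0 < γ.c s) : 0 < γ.μ s :=
  pos_of_mul_pos_right (h.c_eq s hs ▸ hc) (h.r_nonneg hs)

lemma κ_pos (h : γ.IsArc k lam m S) (hs : s ∈ Icc 0 S) : 0 < γ.κ k lam s := by
  refine pos_of_forall_pos_before h.continuousOn_κ (by simpa only [h.κ_zero] using h.curvature_pos)
    (fun t ht hpos => ?_) s hs
  have ht' := h.restrict ht
  have hθ := fun s (hs : s ∈ Ioo 0 t) => ht'.pi_div_two_lt_θ_of_κ_pos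
    (fun s hs => hpos s ⟨hs.1.le, hs.2⟩) (Ioo_subset_Ioc_self hs)
  have hmono := ht'.monotoneOn_κ_mul_integratingFactor
    (fun s hs => ht'.σ_nonneg_of_pi_div_two_le_θ (Ioo_subset_Icc_self hs) (hθ s hs).le)
    (fun s hs => (ht'.μ_pos_of_c_pos (Ioo_subset_Icc_self hs)
      (ht'.c_pos_of_pi_div_two_lt_θ (Ioo_subset_Icc_self hs) (hθ s hs))).le)
  have hhalf : t / 2 ∈ Ioo 0 t := ⟨half_pos ht.1, half_lt_self ht.1⟩
  have hr := ht'.r_pos _ (Ioo_subset_Ioc_self hhalf)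
  have hκ := hpos _ ⟨hhalf.1.le, hhalf.2⟩
  have hle := hmono (Ioo_subset_Icc_self hhalf) ht'.right_mem hhalf.2.le
  refine pos_of_mul_pos_left (lt_of_lt_of_le (by positivity) hle) ?_
  have hrt := h.r_pos t ht
  positivity

lemma pi_div_two_lt_θ (h : γ.IsArc k lam m S) (hs : s ∈ Ioc 0 S) : π / 2 < γ.θ s :=
  h.pi_div_two_lt_θ_of_κ_pos (fun _ hs => h.κ_pos (Ioo_subset_Icc_self hs)) hs

lemma pi_div_two_le_θ (h : γ.IsArc k lam m S) (hs : s ∈ Icc 0 S) : π / 2 ≤ γ.θ s := by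
  rcases hs.1.eq_or_lt with rfl | hpos
  · exact h.θ_zero.ge
  · exact (h.pi_div_two_lt_θ ⟨hpos, hs.2⟩).le

lemma strictMonoOn_θ (h : γ.IsArc k lam m S) : StrictMonoOn γ.θ (Icc 0 S) :=
  strictMonoOn_Icc_of_hasDerivAt_pos h.continuousOn_θ
    (fun s hs => h.hasDerivAt_θ s (Ioo_subset_Icc_self hs))
    fun _ hs => h.κ_pos (Ioo_subset_Icc_self hs)

lemma c_pos (h : γ.IsArc k lam m S) (hs : s ∈ Ioc 0 S) : 0 < γ.c s :=
  h.c_pos_of_pi_div_two_lt_θ (Ioc_subset_Icc_self hs) (h.pi_div_two_lt_θ hs)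

lemma c_nonneg (h : γ.IsArc k lam m S) (hs : s ∈ Icc 0 S) : 0 ≤ γ.c s := by
  rcases hs.1.eq_or_lt with rfl | hpos
  · exact h.c_zero.ge
  · exact (h.c_pos ⟨hpos, hs.2⟩).le

lemma σ_nonneg (h : γ.IsArc k lam m S) (hs : s ∈ Icc 0 S) : 0 ≤ γ.σ s :=
  h.σ_nonneg_of_pi_div_two_le_θ hs (h.pi_div_two_le_θ hs)

lemma μ_pos (h : γ.IsArc k lam m S) (hs : s ∈ Icc 0 S) : 0 < γ.μ s := by
  rcases hs.1.eq_or_lt with rfl | hpos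
  · exact h.curvature_pos.trans_eq h.μ_zero.symm
  · exact h.μ_pos_of_c_pos hs (h.c_pos ⟨hpos, hs.2⟩)

lemma monotoneOn_r (h : γ.IsArc k lam m S) : MonotoneOn γ.r (Icc 0 S) :=
  monotoneOn_Icc_of_hasDerivAt_nonneg h.continuousOn_r
    (fun s hs => h.hasDerivAt_r s (Ioo_subset_Icc_self hs))
    fun _ hs => h.σ_nonneg (Ioo_subset_Icc_self hs)

lemma strictAntiOn_x (h : γ.IsArc k lam m S) : StrictAntiOn γ.x (Icc 0 S) := by
  have hneg : StrictMonoOn (fun s => -γ.x s) (Icc 0 S) :=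
    strictMonoOn_Icc_of_hasDerivAt_pos h.continuousOn_x.neg
      (fun s hs => (h.hasDerivAt_x s (Ioo_subset_Icc_self hs)).fun_neg)
      fun s hs => by simpa only [neg_neg] using h.c_pos (Ioo_subset_Ioc_self hs)
  exact fun a ha b hb hab => neg_lt_neg_iff.1 (hneg ha hb hab)

lemma x_le (h : γ.IsArc k lam m S) (hs : s ∈ Icc 0 S) : γ.x s ≤ (k + 1) * m - lam := by
  rw [← h.x_zero]
  exact h.strictAntiOn_x.antitoneOn h.left_mem hs hs.1

lemma x_ge (h : γ.IsArc k lam m S) (hs : s ∈ Icc 0 S) : γ.x S ≤ γ.x s :=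
  h.strictAntiOn_x.antitoneOn hs h.right_mem hs.2

lemma monotoneOn_c (h : γ.IsArc k lam m S) : MonotoneOn γ.c (Icc 0 S) :=
  monotoneOn_Icc_of_hasDerivAt_nonneg h.continuousOn_c
    (fun _ hs => h.hasDerivAt_c (Ioo_subset_Icc_self hs))
    fun _ hs => mul_nonneg (h.σ_nonneg (Ioo_subset_Icc_self hs))
      (h.κ_pos (Ioo_subset_Icc_self hs)).le

lemma μ_le_κ_of_q_nonneg (h : γ.IsArc k lam m S) (hq : ∀ s ∈ Ioo 0 S, 0 ≤ γ.q s)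
    (hs : s ∈ Icc 0 S) : γ.μ s ≤ γ.κ k lam s := by
  rcases hs.1.eq_or_lt with rfl | hpos
  · rw [h.κ_zero, h.μ_zero]
  have hmono : MonotoneOn (fun s => γ.r s ^ (k + 1) * (γ.κ k lam s - γ.μ s)) (Icc 0 S) :=
    monotoneOn_Icc_of_hasDerivAt_nonneg
      ((h.continuousOn_r.pow _).mul (h.continuousOn_κ.sub h.continuousOn_μ))
      (fun _ hs => h.hasDerivAt_r_pow_mul_κ_sub_μ hs) fun s hs =>
        mul_nonneg (mul_nonneg (pow_nonneg (h.r_nonneg (Ioo_subset_Icc_self hs)) _)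
          (h.κ_pos (Ioo_subset_Icc_self hs)).le) (hq s hs)
  have hle := hmono h.left_mem hs hs.1
  simp only [h.r_zero, zero_pow k.succ_ne_zero, zero_mul] at hle
  exact sub_nonneg.1 (nonneg_of_mul_nonneg_right hle (pow_pos (h.r_pos s ⟨hpos, hs.2⟩) _))

lemma le_μ_of_q_nonneg (h : γ.IsArc k lam m S) (hq : ∀ s ∈ Ioo 0 S, 0 ≤ γ.q s)
    (hs : s ∈ Icc 0 S) : m ≤ γ.μ s := by
  have hmono : MonotoneOn γ.μ (Icc 0 S) :=
    monotoneOn_Icc_of_hasDerivAt_nonneg h.continuousOn_μ (fun _ hs => h.hasDerivAt_μ hs)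
      fun s hs => mul_nonneg (div_nonneg (h.σ_nonneg (Ioo_subset_Icc_self hs))
        (h.r_nonneg (Ioo_subset_Icc_self hs)))
        (sub_nonneg.2 (h.μ_le_κ_of_q_nonneg hq (Ioo_subset_Icc_self hs)))
  exact h.μ_zero ▸ hmono h.left_mem hs hs.1

/-! ### Barrier near the round sphere -/

lemma support_mul_μ_eq (h : γ.IsArc k lam m S) (hs : s ∈ Icc 0 S) :
    (γ.x s * γ.σ s + γ.r s * γ.c s) * γ.μ s = 1 - γ.σ s * γ.q s := by
  rw [q]
  linear_combination γ.c_sq_add_σ_sq s - γ.c s * h.c_eq s hs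

lemma support_mul_le_one (h : γ.IsArc k lam m S) (hq : ∀ s ∈ Ioo 0 S, 0 ≤ γ.q s)
    (hs : s ∈ Ioo 0 S) (hx : 0 ≤ γ.x s) : (γ.x s * γ.σ s + γ.r s * γ.c s) * m ≤ 1 := by
  have hsI := Ioo_subset_Icc_self hs
  have hσ := h.σ_nonneg hsI
  have hsupport : 0 ≤ γ.x s * γ.σ s + γ.r s * γ.c s :=
    add_nonneg (mul_nonneg hx hσ) (mul_nonneg (h.r_nonneg hsI) (h.c_nonneg hsI))
  calc (γ.x s * γ.σ s + γ.r s * γ.c s) * m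
      ≤ (γ.x s * γ.σ s + γ.r s * γ.c s) * γ.μ s :=
        mul_le_mul_of_nonneg_left (h.le_μ_of_q_nonneg hq hsI) hsupport
    _ = 1 - γ.σ s * γ.q s := h.support_mul_μ_eq hsI
    _ ≤ 1 := sub_le_self _ (mul_nonneg hσ (hq s hs))

lemma κ_lt_of_q_nonneg (h : γ.IsArc k lam m S) (hq : ∀ s ∈ Ioo 0 S, 0 ≤ γ.q s)
    (hs : s ∈ Ioo 0 S) (hx : 0 ≤ γ.x s) {K : ℝ} (hK : 1 / m + lam - k * m < K) :
    γ.κ k lam s < K := by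
  have hsupport : γ.x s * γ.σ s + γ.r s * γ.c s ≤ 1 / m :=
    (le_div_iff₀ h.curvature_pos).2 (h.support_mul_le_one hq hs hx)
  have hμ := mul_le_mul_of_nonneg_left (h.le_μ_of_q_nonneg hq (Ioo_subset_Icc_self hs))
    k.cast_nonneg
  rw [κ]
  linarith

lemma hasDerivAt_barrier (h : γ.IsArc k lam m S) (hs : s ∈ Ioo 0 S) :
    HasDerivAt (fun s => m ^ 2 * γ.r s ^ (k + 3) * γ.q s
        - γ.x s * (γ.r s ^ (k + 1) * (γ.κ k lam s - γ.μ s)))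
      (γ.q s * γ.r s ^ (k + 2) * (m ^ 2 * (k + 3) * γ.σ s - γ.κ k lam s * γ.x s)
        + γ.r s ^ (k + 1) * (γ.κ k lam s - γ.μ s)
          * (γ.c s - γ.r s * (m ^ 2 * (γ.x s * γ.σ s + γ.r s * γ.c s)))) s := by
  have hsI := Ioo_subset_Icc_self hs
  have hr := (h.r_pos s ⟨hs.1, hs.2.le⟩).ne'
  refine (((((h.hasDerivAt_r s hsI).fun_pow (k + 3)).const_mul (m ^ 2)).fun_mul
    (h.hasDerivAt_q hs)).fun_sub ((h.hasDerivAt_x s hsI).fun_mul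
      (h.hasDerivAt_r_pow_mul_κ_sub_μ hs))).congr_deriv ?_
  simp only [Nat.add_succ_sub_one]
  push_cast
  field_simp
  ring

lemma barrier_deriv_pos (h : γ.IsArc k lam m S) (hq : ∀ s ∈ Ioo 0 S, 0 < γ.q s)
    (hm : 1 / m + lam - k * m < (k + 3) * m ^ 3) (hs : s ∈ Ioo 0 S) (hx : 0 < γ.x s) :
    0 < γ.q s * γ.r s ^ (k + 2) * (m ^ 2 * (k + 3) * γ.σ s - γ.κ k lam s * γ.x s)
      + γ.r s ^ (k + 1) * (γ.κ k lam s - γ.μ s)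
        * (γ.c s - γ.r s * (m ^ 2 * (γ.x s * γ.σ s + γ.r s * γ.c s))) := by
  have hsI := Ioo_subset_Icc_self hs
  have hq₀ : ∀ s ∈ Ioo 0 S, 0 ≤ γ.q s := fun s hs => (hq s hs).le
  have hmpos := h.curvature_pos
  have hr := h.r_pos s (Ioo_subset_Ioc_self hs)
  have hμ := h.le_μ_of_q_nonneg hq₀ hsI
  have hκx : γ.κ k lam s * γ.x s < m ^ 2 * (k + 3) * γ.σ s :=
    calc γ.κ k lam s * γ.x s < (k + 3) * m ^ 3 * γ.x s :=
          mul_lt_mul_of_pos_right (h.κ_lt_of_q_nonneg hq₀ hs hx.le hm) hx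
      _ = m ^ 2 * (k + 3) * (γ.x s * m) := by ring
      _ ≤ m ^ 2 * (k + 3) * (γ.x s * γ.μ s) := by gcongr
      _ ≤ m ^ 2 * (k + 3) * γ.σ s :=
          mul_le_mul_of_nonneg_left (sub_nonneg.1 (hq₀ s hs)) (by positivity)
  have hc : γ.r s * (m ^ 2 * (γ.x s * γ.σ s + γ.r s * γ.c s)) ≤ γ.c s :=
    calc γ.r s * (m ^ 2 * (γ.x s * γ.σ s + γ.r s * γ.c s))
        = γ.r s * m * ((γ.x s * γ.σ s + γ.r s * γ.c s) * m) := by ring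
      _ ≤ γ.r s * m * 1 := by gcongr; exact h.support_mul_le_one hq₀ hs hx.le
      _ ≤ γ.r s * γ.μ s := by rw [mul_one]; gcongr
      _ = γ.c s := (h.c_eq s hsI).symm
  exact add_pos_of_pos_of_nonneg
    (mul_pos (mul_pos (hq s hs) (pow_pos hr _)) (sub_pos.2 hκx))
    (mul_nonneg (mul_nonneg (pow_nonneg hr.le _)
      (sub_nonneg.2 (h.μ_le_κ_of_q_nonneg hq₀ hsI))) (sub_nonneg.2 hc))

lemma q_pos (h : γ.IsArc k lam m S) (hx : 0 ≤ γ.x S)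
    (hsphere : m * ((k + 1) * m - lam) < 1) (hm : 1 / m + lam - k * m < (k + 3) * m ^ 3)
    (hs : s ∈ Icc 0 S) : 0 < γ.q s := by
  have hq_zero : 0 < γ.q 0 := by
    rw [q, h.σ_zero, h.x_zero, h.μ_zero]
    linarith
  refine pos_of_forall_pos_before h.continuousOn_q hq_zero (fun t ht hpos => ?_) s hs
  have ht' := h.restrict ht
  have hq : ∀ s ∈ Ioo 0 t, 0 < γ.q s := fun s hs => hpos s (Ioo_subset_Ico_self hs)
  have hxt : 0 ≤ γ.x t := hx.trans (h.x_ge (Ioc_subset_Icc_self ht))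
  have hmono : StrictMonoOn (fun s => m ^ 2 * γ.r s ^ (k + 3) * γ.q s
      - γ.x s * (γ.r s ^ (k + 1) * (γ.κ k lam s - γ.μ s))) (Icc 0 t) := by
    refine strictMonoOn_Icc_of_hasDerivAt_pos ?_ (fun s hs => ht'.hasDerivAt_barrier hs)
      fun s hs => ht'.barrier_deriv_pos hq hm hs <| hxt.trans_lt <|
        ht'.strictAntiOn_x (Ioo_subset_Icc_self hs) ht'.right_mem hs.2
    exact ((continuousOn_const.mul (ht'.continuousOn_r.pow _)).mul ht'.continuousOn_q).sub
      (ht'.continuousOn_x.mul ((ht'.continuousOn_r.pow _).mul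
        (ht'.continuousOn_κ.sub ht'.continuousOn_μ)))
  have hlt := hmono ht'.left_mem ht'.right_mem ht.1
  simp only [h.r_zero, zero_pow (Nat.succ_ne_zero _), zero_mul, mul_zero, sub_zero] at hlt
  have hκμ := ht'.μ_le_κ_of_q_nonneg (fun s hs => (hq s hs).le) ht'.right_mem
  have hr := h.r_pos t ht
  have hnonneg : 0 ≤ γ.x t * (γ.r t ^ (k + 1) * (γ.κ k lam t - γ.μ t)) :=
    mul_nonneg hxt (mul_nonneg (pow_nonneg hr.le _) (sub_nonneg.2 hκμ))
  exact pos_of_mul_pos_right (hnonneg.trans_lt (sub_pos.1 hlt)) (by positivity)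

/-! ### Barrier for small axial curvature -/

lemma κ_sub_le (h : γ.IsArc k lam m S) (hlam : lam ≤ (k + 1) * m) (hs : s ∈ Icc 0 S) :
    γ.κ k lam s - γ.r s * γ.c s ≤ (k + 1) * m := by
  have hxσ : γ.x s * γ.σ s ≤ (k + 1) * m - lam :=
    (mul_le_mul_of_nonneg_right (h.x_le hs) (h.σ_nonneg hs)).trans
      (mul_le_of_le_one_right (sub_nonneg.2 hlam) (σ_le_one s))
  have hμ : 0 ≤ k * γ.μ s := mul_nonneg k.cast_nonneg (h.μ_pos hs).le
  rw [κ]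
  linarith

lemma c_le (h : γ.IsArc k lam m S) (hlam : lam ≤ (k + 1) * m) (hs : s ∈ Icc 0 S) :
    γ.c s ≤ (k + 1) * m * γ.r s * exp (γ.r s ^ 2 / 2) := by
  have hm := h.curvature_pos
  have hmono : MonotoneOn
      (fun s => (k + 1) * m * γ.r s - γ.c s * exp (-(γ.r s ^ 2 / 2))) (Icc 0 S) := by
    refine monotoneOn_Icc_of_hasDerivAt_nonneg (f' := fun s => γ.σ s
      * ((k + 1) * m - (γ.κ k lam s - γ.r s * γ.c s) * exp (-(γ.r s ^ 2 / 2))))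
      ?_ (fun s hs => ?_) fun s hs => ?_
    · have hr := h.continuousOn_r
      exact (continuousOn_const.mul hr).sub (h.continuousOn_c.mul (by fun_prop))
    · have hsI := Ioo_subset_Icc_self hs
      refine (((h.hasDerivAt_r s hsI).const_mul _).fun_sub ((h.hasDerivAt_c hsI).fun_mul
        (((h.hasDerivAt_r s hsI).fun_pow 2).div_const 2).fun_neg.exp)).congr_deriv ?_
      push_cast
      ring
    · have hsI := Ioo_subset_Icc_self hs
      have hexp : exp (-(γ.r s ^ 2 / 2)) ≤ 1 := exp_le_one_iff.2 (by nlinarith)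
      refine mul_nonneg (h.σ_nonneg hsI) (sub_nonneg.2 ?_)
      calc (γ.κ k lam s - γ.r s * γ.c s) * exp (-(γ.r s ^ 2 / 2))
          ≤ (k + 1) * m * exp (-(γ.r s ^ 2 / 2)) := by
            gcongr
            exact h.κ_sub_le hlam hsI
        _ ≤ (k + 1) * m := mul_le_of_le_one_right (by positivity) hexp
  have hle := hmono h.left_mem hs hs.1
  simp only [h.r_zero, h.c_zero, mul_zero, zero_mul, sub_zero, sub_nonneg] at hle
  rwa [exp_neg, ← div_eq_mul_inv, div_le_iff₀ (exp_pos _)] at hle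

lemma c_le_of_r_le (h : γ.IsArc k lam m S) (hlam : lam ≤ (k + 1) * m) (hs : s ∈ Icc 0 S) {ρ : ℝ}
    (hρ : γ.r s ≤ ρ) : γ.c s ≤ (k + 1) * m * ρ * exp (ρ ^ 2 / 2) := by
  have hm := h.curvature_pos
  have hr := h.r_nonneg hs
  have hρ₀ := hr.trans hρ
  exact (h.c_le hlam hs).trans (by gcongr)

lemma μ_le_of_r_le (h : γ.IsArc k lam m S) (hlam : lam ≤ (k + 1) * m) (hs : s ∈ Icc 0 S) {ρ : ℝ}
    (hρ : γ.r s ≤ ρ) : γ.μ s ≤ (k + 1) * m * exp (ρ ^ 2 / 2) := by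
  have hm := h.curvature_pos
  have hr := h.r_nonneg hs
  rcases hs.1.eq_or_lt with rfl | hpos
  · rw [h.μ_zero]
    have hexp : 1 ≤ exp (ρ ^ 2 / 2) := one_le_exp (by positivity)
    have : 0 ≤ k * m := by positivity
    calc m ≤ (k + 1) * m := by linarith
      _ ≤ (k + 1) * m * exp (ρ ^ 2 / 2) := le_mul_of_one_le_right (by positivity) hexp
  · have hrpos := h.r_pos s ⟨hpos, hs.2⟩
    have hμ : γ.μ s ≤ (k + 1) * m * exp (γ.r s ^ 2 / 2) := by
      refine le_of_mul_le_mul_left ?_ hrpos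
      calc γ.r s * γ.μ s = γ.c s := (h.c_eq s hs).symm
        _ ≤ (k + 1) * m * γ.r s * exp (γ.r s ^ 2 / 2) := h.c_le hlam hs
        _ = γ.r s * ((k + 1) * m * exp (γ.r s ^ 2 / 2)) := by ring
    exact hμ.trans (by gcongr)

lemma half_lt_σ (h : γ.IsArc k lam m S) (hs : s ∈ Icc 0 S) (hc : γ.c s ≤ 1 / 2) :
    1 / 2 < γ.σ s := by
  nlinarith [γ.c_sq_add_σ_sq s, h.c_nonneg hs, h.σ_nonneg hs]

lemma x_zero_sub_le (h : γ.IsArc k lam m S) (hc : γ.c S ≤ 1 / 2) :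
    (k + 1) * m - lam - 2 * γ.c S * γ.r S ≤ γ.x S := by
  have hmono : MonotoneOn (fun s => γ.x s + 2 * γ.c S * γ.r s) (Icc 0 S) := by
    refine monotoneOn_Icc_of_hasDerivAt_nonneg
      (h.continuousOn_x.add (continuousOn_const.mul h.continuousOn_r))
      (fun s hs => (h.hasDerivAt_x s (Ioo_subset_Icc_self hs)).add
        ((h.hasDerivAt_r s (Ioo_subset_Icc_self hs)).const_mul _)) fun s hs => ?_
    have hsI := Ioo_subset_Icc_self hs
    have hcs := h.monotoneOn_c hsI h.right_mem hs.2.le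
    have hσ := h.half_lt_σ hsI (hcs.trans hc)
    nlinarith [h.c_nonneg h.right_mem]
  have hle := hmono h.left_mem h.right_mem h.length_pos.le
  simp only [h.x_zero, h.r_zero, mul_zero, add_zero] at hle
  linarith

/- Either `r ≤ x̂`, where `μ` is small, or `x μ ≤ r μ = c`. -/
lemma q_nonneg_of_c_le_half (h : γ.IsArc k lam m S) (hlam : lam ≤ (k + 1) * m)
    (hm : ((k + 1) * m - lam) * ((k + 1) * m * exp (((k + 1) * m - lam) ^ 2 / 2)) ≤ 1 / 2)
    (hs : s ∈ Icc 0 S) (hc : γ.c s ≤ 1 / 2) : 0 ≤ γ.q s := by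
  have hμ := (h.μ_pos hs).le
  have hx := h.x_le hs
  have hxμ : γ.x s * γ.μ s ≤ 1 / 2 := by
    rcases le_total (γ.r s) ((k + 1) * m - lam) with hr | hr
    · exact (mul_le_mul hx (h.μ_le_of_r_le hlam hs hr) hμ (sub_nonneg.2 hlam)).trans hm
    · calc γ.x s * γ.μ s ≤ γ.r s * γ.μ s := mul_le_mul_of_nonneg_right (hx.trans hr) hμ
        _ = γ.c s := (h.c_eq s hs).symm
        _ ≤ 1 / 2 := hc
  exact sub_nonneg.2 (hxμ.trans (h.half_lt_σ hs hc).le)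

lemma mul_c_le_κ_of_large (h : γ.IsArc k lam m S) (hs : s ∈ Icc 0 S) (hx : 0 ≤ γ.x s) {β : ℝ}
    (hr : 1 ≤ γ.r s) (hβ : 2 * β + k ≤ γ.r s) (hlam : -lam ≤ β * γ.c s) :
    β * γ.c s ≤ γ.κ k lam s := by
  have hxσ : 0 ≤ γ.x s * γ.σ s := mul_nonneg hx (h.σ_nonneg hs)
  have hμ : k * γ.μ s ≤ k * γ.c s := by
    rw [h.c_eq s hs]
    exact mul_le_mul_of_nonneg_left (le_mul_of_one_le_left (h.μ_pos hs).le hr) k.cast_nonneg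
  have hc : (2 * β + k) * γ.c s ≤ γ.r s * γ.c s :=
    mul_le_mul_of_nonneg_right hβ (h.c_nonneg hs)
  rw [κ]
  linarith

lemma monotoneOn_κ_sub (h : γ.IsArc k lam m S) (hlam : lam ≤ (k + 1) * m) {β a : ℝ} (hβ : 0 ≤ β)
    (hq : ∀ s ∈ Ioo 0 S, 0 ≤ γ.q s) (hc : γ.c S ≤ 1 / 2) (ha : 0 ≤ a)
    (hra : 2 * β + 1 + ((k + 1) * m - lam) + k ≤ γ.r a) :
    MonotoneOn (fun s => γ.κ k lam s - 2 * β * γ.c s - m * γ.r s) (Icc a S) := by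
  have hsub : ∀ s ∈ Ioo a S, s ∈ Ioo 0 S := fun s hs => ⟨ha.trans_lt hs.1, hs.2⟩
  refine monotoneOn_Icc_of_hasDerivAt_nonneg
    (((h.continuousOn_κ.sub (continuousOn_const.mul h.continuousOn_c)).sub
      (continuousOn_const.mul h.continuousOn_r)).mono (Icc_subset_Icc_left ha))
    (fun s hs => (((h.hasDerivAt_κ (hsub s hs)).sub
      ((h.hasDerivAt_c (Ioo_subset_Icc_self (hsub s hs))).const_mul _)).sub
      ((h.hasDerivAt_r s (Ioo_subset_Icc_self (hsub s hs))).const_mul _))) fun s hs => ?_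
  have hsI := Ioo_subset_Icc_self (hsub s hs)
  have hr : 2 * β + 1 + ((k + 1) * m - lam) + k ≤ γ.r s :=
    hra.trans (h.monotoneOn_r ⟨ha, (hs.1.trans hs.2).le⟩ hsI hs.1.le)
  have hcs := (h.monotoneOn_c hsI h.right_mem hs.2.le).trans hc
  have hσ := h.half_lt_σ hsI hcs
  have hκ := h.κ_pos hsI
  have hμ := h.μ_pos hsI
  have hκμ := h.μ_le_κ_of_q_nonneg hq hsI
  have hmμ := h.le_μ_of_q_nonneg hq hsI
  have hxc : γ.x s * γ.c s ≤ ((k + 1) * m - lam) * γ.σ s :=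
    mul_le_mul (h.x_le hsI) (by linarith) (h.c_nonneg hsI) (sub_nonneg.2 hlam)
  have hquot : γ.σ s / γ.r s * (γ.κ k lam s - γ.μ s) ≤ γ.σ s * γ.κ k lam s :=
    mul_le_mul (div_le_self (by linarith) (by linarith [k.cast_nonneg (α := ℝ)]))
      (by linarith) (by linarith) (by linarith)
  have hκxc := mul_le_mul_of_nonneg_left hxc hκ.le
  have hkquot := mul_le_mul_of_nonneg_left hquot (k.cast_nonneg (α := ℝ))
  have hκσr := mul_le_mul_of_nonneg_left hr (by positivity : 0 ≤ γ.κ k lam s * γ.σ s)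
  have hmσ : m * γ.σ s ≤ γ.κ k lam s * γ.σ s :=
    mul_le_mul_of_nonneg_right (hmμ.trans hκμ) (by linarith)
  linarith

lemma mul_c_le_κ (h : γ.IsArc k lam m S) (hlam : lam < 0) (hx : 0 ≤ γ.x S) {β a : ℝ}
    (hβ : -2 * lam ≤ β) (ha : 2 * β + 1 + ((k + 1) * m - lam) + k ≤ a)
    (hm : ((k + 1) * m - lam) * ((k + 1) * m * exp (((k + 1) * m - lam) ^ 2 / 2)) ≤ 1 / 2)
    (hr : a + 2 * β * ((k + 1) * a * exp (a ^ 2 / 2)) ≤ γ.r S) :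
    β * γ.c S ≤ γ.κ k lam S := by
  have hmpos := h.curvature_pos
  have hx₀ : lam ≤ (k + 1) * m := hlam.le.trans (by positivity)
  have hβpos : 0 < β := by linarith
  have ha₁ : 1 ≤ a := by linarith [k.cast_nonneg (α := ℝ)]
  have har : a ≤ γ.r S := (le_add_of_nonneg_right (by positivity)).trans hr
  rcases le_or_gt (-lam) (β * γ.c S) with hlarge | hsmall
  · exact h.mul_c_le_κ_of_large h.right_mem hx (ha₁.trans har) (by linarith) hlarge
  have hc : γ.c S ≤ 1 / 2 := by
    by_contra! hc
    nlinarith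
  have hq : ∀ s ∈ Ioo 0 S, 0 ≤ γ.q s := fun s hs =>
    h.q_nonneg_of_c_le_half hx₀ hm (Ioo_subset_Icc_self hs)
      ((h.monotoneOn_c (Ioo_subset_Icc_self hs) h.right_mem hs.2.le).trans hc)
  obtain ⟨s, hs, hrs⟩ : a ∈ γ.r '' Icc 0 S :=
    intermediate_value_Icc h.length_pos.le h.continuousOn_r ⟨by linarith [h.r_zero], har⟩
  have hle := h.monotoneOn_κ_sub hx₀ hβpos.le hq hc hs.1 (ha.trans_eq hrs.symm)
    (left_mem_Icc.2 hs.2) (right_mem_Icc.2 hs.2) hs.2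
  simp only [hrs] at hle
  have hcs : 2 * β * γ.c s ≤ 2 * β * ((k + 1) * m * a * exp (a ^ 2 / 2)) :=
    mul_le_mul_of_nonneg_left (h.c_le_of_r_le hx₀ hs hrs.le) (by positivity)
  have hmr := mul_le_mul_of_nonneg_left hr hmpos.le
  have hκs := h.κ_pos hs
  have hβc : 0 ≤ β * γ.c S := mul_nonneg hβpos.le (h.c_nonneg h.right_mem)
  linarith

lemma monotoneOn_mul_x_add_θ (h : γ.IsArc k lam m S) {β a : ℝ} (ha : 0 ≤ a)
    (hκ : ∀ s ∈ Ioo a S, β * γ.c s ≤ γ.κ k lam s) :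
    MonotoneOn (fun s => β * γ.x s + γ.θ s) (Icc a S) := by
  have hsub : Icc a S ⊆ Icc 0 S := Icc_subset_Icc_left ha
  refine monotoneOn_Icc_of_hasDerivAt_nonneg
    (((continuousOn_const.mul h.continuousOn_x).add h.continuousOn_θ).mono hsub)
    (fun s hs => ((h.hasDerivAt_x s (hsub (Ioo_subset_Icc_self hs))).const_mul β).add
      (h.hasDerivAt_θ s (hsub (Ioo_subset_Icc_self hs)))) fun s hs => ?_
  linarith [hκ s hs]

/- Up to radius `ρ` the arc is nearly vertical, so `x` hardly drops; beyond it `κ ≥ β c`, so the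
tangent turns by at least `β` times the drop of `x`. As only the angle `π / 2` is available, `x`
stays positive. -/
lemma x_pos_of_small_curvature (h : γ.IsArc k lam m S) (hlam : lam < 0) (hx : 0 ≤ γ.x S)
    {β a ρ : ℝ} (hβ : -2 * lam ≤ β) (hβ' : 2 * π ≤ β * -lam)
    (ha : 2 * β + 1 + ((k + 1) * m - lam) + k ≤ a)
    (hρ : a + 2 * β * ((k + 1) * a * exp (a ^ 2 / 2)) ≤ ρ)
    (hm : ((k + 1) * m - lam) * ((k + 1) * m * exp (((k + 1) * m - lam) ^ 2 / 2)) ≤ 1 / 2)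
    (hmρ : (k + 1) * m * ρ * exp (ρ ^ 2 / 2) ≤ 1 / 2)
    (hmρ' : 2 * ((k + 1) * m * ρ * exp (ρ ^ 2 / 2)) * ρ ≤ -lam / 4) : 0 < γ.x S := by
  have hmpos := h.curvature_pos
  have hx₀ : lam ≤ (k + 1) * m := hlam.le.trans (by positivity)
  have hn : 0 < (k + 1) * m := by positivity
  have hβpos : 0 < β := by linarith
  have hapos : 0 < a := by linarith [k.cast_nonneg (α := ℝ)]
  have hinner : ∀ s ∈ Ioc 0 S, γ.r s ≤ ρ → -(3 / 4) * lam ≤ γ.x s := fun s hs hr => by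
    have hc := h.c_le_of_r_le hx₀ (Ioc_subset_Icc_self hs) hr
    have hdrop := (h.restrict hs).x_zero_sub_le (hc.trans hmρ)
    have hcr := mul_le_mul hc hr (h.r_pos s hs).le ((h.c_pos hs).le.trans hc)
    linarith
  rcases le_or_gt (γ.r S) ρ with hrS | hrS
  · linarith [hinner S (right_mem_Ioc.2 h.length_pos) hrS]
  have hρpos : 0 < ρ := lt_of_lt_of_le (by positivity) hρ
  obtain ⟨s, hs, hrs⟩ : ρ ∈ γ.r '' Icc 0 S :=
    intermediate_value_Icc h.length_pos.le h.continuousOn_r ⟨h.r_zero.trans_le hρpos.le, hrS.le⟩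
  have hspos : 0 < s := hs.1.lt_of_ne fun h₀ => hρpos.ne (by rw [← hrs, ← h₀, h.r_zero])
  have houter : ∀ t ∈ Ioo s S, β * γ.c t ≤ γ.κ k lam t := fun t ht => by
    have htI : t ∈ Icc 0 S := ⟨hs.1.trans ht.1.le, ht.2.le⟩
    exact (h.restrict ⟨hspos.trans ht.1, ht.2.le⟩).mul_c_le_κ hlam (hx.trans (h.x_ge htI)) hβ ha hm
      (hρ.trans (hrs.symm.trans_le (h.monotoneOn_r hs htI ht.1.le)))
  have hle := h.monotoneOn_mul_x_add_θ hs.1 houter (left_mem_Icc.2 hs.2) (right_mem_Icc.2 hs.2) hs.2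
  have hxs := mul_le_mul_of_nonneg_left (hinner s ⟨hspos, hs.2⟩ hrs.le) hβpos.le
  have hθs := h.pi_div_two_le_θ hs
  have hθS := h.θ_le S h.right_mem
  exact pos_of_mul_pos_right (by linarith [pi_pos] : 0 < β * γ.x S) hβpos.le

end IsArc

variable {k lam}

lemma eventually_x_pos (hlam : lam < 0) :
    ∀ᶠ m in 𝓝[>] 0, ∀ (γ : ProfileCurve) (S : ℝ), γ.IsArc k lam m S → 0 ≤ γ.x S → 0 < γ.x S := by
  let β := -2 * lam + 2 * π / -lam
  let a := 2 * β + 1 + ((k + 1) * 1 - lam) + k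
  let ρ := a + 2 * β * ((k + 1) * a * exp (a ^ 2 / 2))
  have hβ : 2 * π ≤ β * -lam := by
    rw [add_mul, div_mul_cancel₀ _ (neg_pos.2 hlam).ne']
    nlinarith
  filter_upwards [eventually_nhdsGT_zero_lt continuous_id rfl one_pos,
    eventually_nhdsGT_zero_lt (f := fun m => ((k + 1) * m - lam) * ((k + 1) * m
      * exp (((k + 1) * m - lam) ^ 2 / 2))) (by fun_prop) (by simp) one_half_pos,
    eventually_nhdsGT_zero_lt (f := fun m => (k + 1) * m * ρ * exp (ρ ^ 2 / 2)) (by fun_prop)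
      (by simp) one_half_pos,
    eventually_nhdsGT_zero_lt (f := fun m => 2 * ((k + 1) * m * ρ * exp (ρ ^ 2 / 2)) * ρ)
      (by fun_prop) (by simp) (by linarith : 0 < -lam / 4)] with m hm₁ hm hmρ hmρ' γ S h hx
  refine h.x_pos_of_small_curvature hlam hx (β := β) (a := a) (ρ := ρ) ?_ hβ ?_ le_rfl hm.le
    hmρ.le hmρ'.le
  · exact le_add_of_nonneg_right (div_nonneg two_pi_pos.le (neg_pos.2 hlam).le)
  · change _ ≤ 2 * β + 1 + ((k + 1) * 1 - lam) + k
    gcongr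
    exact hm₁.le

end ProfileCurve

/-! ### The round sphere -/

/-- The radius `R` of the round `n`-dimensional sphere centred at the origin solving the
`λ`-hypersurface equation, i.e. the positive root of `R ^ 2 + λ R = n`. -/
noncomputable def sphereRadius (n lam : ℝ) : ℝ := (-lam + √(lam ^ 2 + 4 * n)) / 2

lemma sphereRadius_pos {n lam : ℝ} (hn : 0 < n) : 0 < sphereRadius n lam := by
  have hlt : |lam| < √(lam ^ 2 + 4 * n) := by
    rw [← sqrt_sq_eq_abs]
    exact sqrt_lt_sqrt (sq_nonneg lam) (by linarith)
  rw [sphereRadius]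
  linarith [le_abs_self lam]

lemma sphereRadius_sq_add {n lam : ℝ} (hn : 0 ≤ n) :
    sphereRadius n lam ^ 2 + lam * sphereRadius n lam = n := by
  rw [sphereRadius]
  linear_combination sq_sqrt (by positivity : 0 ≤ lam ^ 2 + 4 * n) / 4

lemma lt_sphereRadius {n lam t : ℝ} (ht : t ^ 2 + lam * t < n) : t < sphereRadius n lam := by
  have hlt : 2 * t + lam < √(lam ^ 2 + 4 * n) := lt_sqrt_of_sq_lt (by linarith)
  rw [sphereRadius]
  linarith

lemma sphereRadius_lt_sqrt {n lam : ℝ} (hn : 0 ≤ n) (hlam : -2 / √(n + 2) < lam) :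
    sphereRadius n lam < √(n + 2) := by
  have hw : 0 < √(n + 2) := sqrt_pos.2 (by linarith)
  have hw_sq : √(n + 2) ^ 2 = n + 2 := sq_sqrt (by linarith)
  rw [div_lt_iff₀ hw] at hlam
  have hpos : 0 < 2 * √(n + 2) + lam :=
    pos_of_mul_pos_left (by linarith : 0 < (2 * √(n + 2) + lam) * √(n + 2)) hw.le
  have hlt : √(lam ^ 2 + 4 * n) < 2 * √(n + 2) + lam := (sqrt_lt' hpos).2 (by linarith)
  rw [sphereRadius]
  linarith

lemma mul_lt_one_of_lt_inv_sphereRadius {n lam m : ℝ} (hn : 0 < n) (hm : 0 < m)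
    (hmR : m < (sphereRadius n lam)⁻¹) : m * (n * m - lam) < 1 := by
  have hR := sphereRadius_pos (lam := lam) hn
  have hsq := sphereRadius_sq_add (lam := lam) hn.le
  rw [← one_div, lt_div_iff₀ hR] at hmR
  have hpos : 0 < sphereRadius n lam + lam :=
    pos_of_mul_pos_right (by linarith : 0 < sphereRadius n lam * (sphereRadius n lam + lam)) hR.le
  have hprod : 0 < (1 - m * sphereRadius n lam) * (1 + m * (sphereRadius n lam + lam)) :=
    mul_pos (sub_pos.2 hmR) (by positivity)
  linear_combination hprod - m ^ 2 * hsq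

/- At `m = 1 / R` the inequality says `R ^ 2 < n + 2`. -/
lemma eventually_barrier_condition {n lam : ℝ} (hn : 0 < n) (hlam : -2 / √(n + 2) < lam) :
    ∀ᶠ m in 𝓝[<] (sphereRadius n lam)⁻¹, 1 / m + lam - (n - 1) * m < (n + 2) * m ^ 3 := by
  have hR := sphereRadius_pos (lam := lam) hn
  have hR_lt : sphereRadius n lam ^ 2 < n + 2 := by
    rw [← sq_sqrt (by linarith : 0 ≤ n + 2)]
    exact pow_lt_pow_left₀ (sphereRadius_lt_sqrt hn.le hlam) hR.le two_ne_zero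
  refine nhdsWithin_le_nhds (ContinuousAt.eventually_lt ?_ (by fun_prop) ?_)
  · fun_prop (disch := positivity)
  · have hid : (n + 2) * (sphereRadius n lam)⁻¹ ^ 3 - (1 / (sphereRadius n lam)⁻¹ + lam
        - (n - 1) * (sphereRadius n lam)⁻¹)
        = (n + 2 - sphereRadius n lam ^ 2) / sphereRadius n lam ^ 3 := by
      field_simp
      linear_combination -sphereRadius n lam ^ 2 * sphereRadius_sq_add (lam := lam) hn.le
    have hpos : 0 < (n + 2 - sphereRadius n lam ^ 2) / sphereRadius n lam ^ 3 :=
      div_pos (sub_pos.2 hR_lt) (pow_pos hR 3)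
    exact sub_pos.1 (hid ▸ hpos)

/-! ### A Volterra fixed point -/

/-- The mean `s ^ (-(k + 1)) * ∫ t in 0..s, t ^ k * h t`, written so as to make sense at `s = 0`.
It inverts `ψ ↦ s * ψ' + (k + 1) * ψ`, the singular part of the profile equation. -/
noncomputable def weightedMean (k : ℕ) (h : ℝ → ℝ) (s : ℝ) : ℝ :=
  ∫ τ in (0 : ℝ)..1, τ ^ k * h (s * τ)

section WeightedMean

variable (k : ℕ)

lemma continuous_weightedMean_uncurry {X : Type*} [TopologicalSpace X] {h : X → ℝ → ℝ}
    (hh : Continuous ↿h) : Continuous fun z : X × ℝ => weightedMean k (h z.1) z.2 :=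
  intervalIntegral.continuous_parametric_intervalIntegral_of_continuous'
    (f := fun (z : X × ℝ) τ => τ ^ k * h z.1 (z.2 * τ))
    ((continuous_snd.pow k).mul (hh.comp (by fun_prop :
      Continuous fun w : (X × ℝ) × ℝ => (w.1.1, w.1.2 * w.2)))) 0 1

lemma continuous_weightedMean {h : ℝ → ℝ} (hh : Continuous h) : Continuous (weightedMean k h) :=
  (continuous_weightedMean_uncurry k (h := fun _ : Unit => h) (hh.comp continuous_snd)).comp
    (Continuous.prodMk_right ())

lemma weightedMean_zero (h : ℝ → ℝ) : weightedMean k h 0 = h 0 / (k + 1) := by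
  simp only [weightedMean, zero_mul, intervalIntegral.integral_mul_const, integral_pow, one_pow,
    zero_pow k.succ_ne_zero, sub_zero]
  ring

lemma pow_succ_mul_weightedMean (h : ℝ → ℝ) (s : ℝ) :
    s ^ (k + 1) * weightedMean k h s = ∫ t in (0 : ℝ)..s, t ^ k * h t := by
  have hsub := intervalIntegral.mul_integral_comp_mul_left (a := 0) (b := 1)
    (f := fun t => t ^ k * h t) s
  rw [mul_zero, mul_one] at hsub
  rw [← hsub, weightedMean, pow_succ', mul_assoc, ← intervalIntegral.integral_const_mul]
  simp only [mul_pow, mul_assoc]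

lemma hasDerivAt_mul_weightedMean {h : ℝ → ℝ} (hh : Continuous h) (s : ℝ) :
    HasDerivAt (fun s => s * weightedMean k h s) (h s - k * weightedMean k h s) s := by
  have hw := continuous_weightedMean k hh
  have off_zero (s : ℝ) (hs : s ≠ 0) :
      HasDerivAt (fun s => s * weightedMean k h s) (h s - k * weightedMean k h s) s := by
    have hint : HasDerivAt (fun s => ∫ t in (0 : ℝ)..s, t ^ k * h t) (s ^ k * h s) s :=
      ((continuous_id.pow k).mul hh).integral_hasStrictDerivAt 0 s |>.hasDerivAt
    have heq : (fun s => s * weightedMean k h s) =ᶠ[𝓝 s]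
        fun s => (∫ t in (0 : ℝ)..s, t ^ k * h t) / s ^ k := by
      filter_upwards [isOpen_ne.mem_nhds hs] with t ht
      rw [← pow_succ_mul_weightedMean, pow_succ']
      have := pow_ne_zero k ht
      field_simp
    refine ((hint.div (hasDerivAt_pow k s) (pow_ne_zero k hs)).congr_of_eventuallyEq
      heq).congr_deriv ?_
    rw [← pow_succ_mul_weightedMean]
    rcases k with _ | k
    · simp
    · simp only [Nat.add_sub_cancel]
      push_cast
      field_simp
      ring
  rcases eq_or_ne s 0 with rfl | hs
  · exact hasDerivAt_of_hasDerivAt_of_ne off_zero (by fun_prop) (by fun_prop)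
  · exact off_zero s hs

lemma abs_weightedMean_sub_le {f g φ : ℝ → ℝ} (hf : Continuous f) (hg : Continuous g)
    (hφ : Continuous φ) {s : ℝ} (hs : 0 ≤ s) (h : ∀ t ∈ Icc 0 s, |f t - g t| ≤ φ t) :
    |weightedMean k f s - weightedMean k g s| ≤ weightedMean 0 φ s := by
  have hint {h : ℝ → ℝ} (hh : Continuous h) :
      IntervalIntegrable (fun τ => τ ^ k * h (s * τ)) MeasureTheory.volume 0 1 :=
    (by fun_prop : Continuous fun τ => τ ^ k * h (s * τ)).intervalIntegrable 0 1
  have hintφ : Continuous fun τ => φ (s * τ) := by fun_prop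
  simp only [weightedMean, pow_zero, one_mul]
  rw [← intervalIntegral.integral_sub (hint hf) (hint hg), ← norm_eq_abs]
  refine intervalIntegral.norm_integral_le_of_norm_le zero_le_one (.of_forall fun τ hτ => ?_)
    (hintφ.intervalIntegrable 0 1)
  rw [← mul_sub, norm_mul, norm_eq_abs, norm_eq_abs, abs_of_nonneg (pow_nonneg hτ.1.le k)]
  exact (mul_le_of_le_one_left (abs_nonneg _) (pow_le_one₀ hτ.1.le hτ.2)).trans
    (h _ ⟨mul_nonneg hs hτ.1.le, mul_le_of_le_one_right hs hτ.2⟩)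

lemma abs_weightedMean_sub_le_exp {f g : ℝ → ℝ} (hf : Continuous f) (hg : Continuous g)
    {C D s : ℝ} (hC : 0 < C) (hD : 0 ≤ D) (hs : 0 ≤ s)
    (h : ∀ t ∈ Icc 0 s, |f t - g t| ≤ C * s * (exp (2 * C * t) * D)) :
    |weightedMean k f s - weightedMean k g s| ≤ exp (2 * C * s) * (D / 2) := by
  have hexp := pow_succ_mul_weightedMean 0 (fun t => exp (2 * C * t)) s
  simp only [zero_add, pow_one, pow_zero, one_mul] at hexp
  rw [intervalIntegral.integral_comp_mul_left _ (by positivity), integral_exp, mul_zero, exp_zero,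
    smul_eq_mul] at hexp
  calc |weightedMean k f s - weightedMean k g s|
      ≤ weightedMean 0 (fun t => C * s * (exp (2 * C * t) * D)) s :=
        abs_weightedMean_sub_le k hf hg (by fun_prop) hs h
    _ = C * D * (s * weightedMean 0 (fun t => exp (2 * C * t)) s) := by
        simp only [weightedMean, pow_zero, one_mul, intervalIntegral.integral_const_mul,
          intervalIntegral.integral_mul_const]
        ring
    _ = (exp (2 * C * s) - 1) * (D / 2) := by
        rw [hexp]
        field_simp
    _ ≤ exp (2 * C * s) * (D / 2) := by
        gcongr
        exact sub_le_self _ zero_le_one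

end WeightedMean

section FixedPoint

variable {P : Type*} [TopologicalSpace P] {C T : ℝ}

/-- The family of functions on `ℝ` determined by `v` on `[0, T]`, frozen outside. The exponential
weight turns the sup norm of `v` into a norm for which Volterra operators contract. -/
noncomputable def expWeighted (C : ℝ) (hT : 0 ≤ T) (v : C(P × Icc 0 T, ℝ)) (p : P) (s : ℝ) : ℝ :=
  exp (2 * C * projIcc 0 T hT s) * v (p, projIcc 0 T hT s)

lemma continuous_expWeighted (hT : 0 ≤ T) (v : C(P × Icc 0 T, ℝ)) :
    Continuous ↿(expWeighted C hT v) := by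
  have hproj : Continuous fun z : P × ℝ => projIcc 0 T hT z.2 :=
    continuous_projIcc.comp continuous_snd
  have hexp : Continuous fun z : P × ℝ => exp (2 * C * projIcc 0 T hT z.2) := by fun_prop
  exact hexp.mul (v.continuous.comp (continuous_fst.prodMk hproj))

lemma expWeighted_apply {hT : 0 ≤ T} (v : C(P × Icc 0 T, ℝ)) (p : P) {s : ℝ} (hs : s ∈ Icc 0 T) :
    expWeighted C hT v p s = exp (2 * C * s) * v (p, ⟨s, hs⟩) := by
  rw [expWeighted, projIcc_of_mem hT hs]

variable [CompactSpace P]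

lemma abs_expWeighted_sub_le {hT : 0 ≤ T} (v w : C(P × Icc 0 T, ℝ)) (p : P) {s : ℝ}
    (hs : s ∈ Icc 0 T) :
    |expWeighted C hT v p s - expWeighted C hT w p s| ≤ exp (2 * C * s) * dist v w := by
  rw [expWeighted_apply v p hs, expWeighted_apply w p hs, ← mul_sub, abs_mul, abs_exp]
  gcongr
  exact ContinuousMap.dist_apply_le_dist (f := v) (g := w) (p, ⟨s, hs⟩)

theorem exists_eq_weightedMean (k : ℕ) {F : P → (ℝ → ℝ) → ℝ → ℝ} (hC : 0 < C) (hT : 0 ≤ T)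
    (hF : ∀ u : P → ℝ → ℝ, Continuous ↿u → Continuous ↿fun p => F p (u p))
    (hLip : ∀ p, ∀ u v : ℝ → ℝ, Continuous u → Continuous v → ∀ s ∈ Icc 0 T, ∀ M,
      (∀ t ∈ Icc 0 s, |u t - v t| ≤ M) → |F p u s - F p v s| ≤ C * s * M) :
    ∃ U : P → ℝ → ℝ, Continuous ↿U ∧
      ∀ p, ∀ s ∈ Icc 0 T, U p s = weightedMean k (F p (U p)) s := by
  have hcont {u : P → ℝ → ℝ} (hu : Continuous ↿u) (p : P) : Continuous (u p) :=
    hu.comp (Continuous.prodMk_right p)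
  let ext := expWeighted (P := P) C hT
  have hext (v) : Continuous ↿(ext v) := continuous_expWeighted hT v
  let Φ (v : C(P × Icc 0 T, ℝ)) : C(P × Icc 0 T, ℝ) :=
    ⟨fun z => (exp (2 * C * z.2))⁻¹ * weightedMean k (F z.1 (ext v z.1)) z.2, by
      have hmean := (continuous_weightedMean_uncurry k (hF _ (hext v))).comp
        (by fun_prop : Continuous fun z : P × Icc 0 T => (z.1, (z.2 : ℝ)))
      exact (Continuous.inv₀ (by fun_prop) fun _ => (exp_pos _).ne').mul hmean⟩
  have hΦ : ContractingWith (1 / 2) Φ := by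
    refine ⟨by norm_num [← NNReal.coe_lt_coe], LipschitzWith.of_dist_le_mul fun v w =>
      (ContinuousMap.dist_le (by positivity)).2 fun ⟨p, s⟩ => ?_⟩
    have hFdist : ∀ t ∈ Icc 0 (s : ℝ), |F p (ext v p) t - F p (ext w p) t| ≤
        C * s * (exp (2 * C * t) * dist v w) := fun t ht => by
      have hsT := ht.2.trans s.2.2
      refine (hLip p _ _ (hcont (hext v) p) (hcont (hext w) p) t ⟨ht.1, hsT⟩
        (exp (2 * C * t) * dist v w) fun t' ht' =>
          (abs_expWeighted_sub_le v w p ⟨ht'.1, ht'.2.trans hsT⟩).trans ?_).trans ?_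
      · gcongr
        exact ht'.2
      · gcongr
        exact ht.2
    have hmean := abs_weightedMean_sub_le_exp k (hcont (hF _ (hext v)) p)
      (hcont (hF _ (hext w)) p) hC dist_nonneg s.2.1 hFdist
    change |(exp (2 * C * s))⁻¹ * weightedMean k (F p (ext v p)) s
      - (exp (2 * C * s))⁻¹ * weightedMean k (F p (ext w p)) s| ≤ _
    rw [← mul_sub, abs_mul, abs_inv, abs_exp, inv_mul_le_iff₀ (exp_pos _)]
    exact hmean.trans_eq (by push_cast; ring)
  refine ⟨ext (hΦ.fixedPoint Φ), hext _, fun p s hs => ?_⟩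
  have hfix := DFunLike.congr_fun (hΦ.fixedPoint_isFixedPt (f := Φ)) (p, ⟨s, hs⟩)
  calc ext (hΦ.fixedPoint Φ) p s
      = exp (2 * C * s) * Φ (hΦ.fixedPoint Φ) (p, ⟨s, hs⟩) := by
        rw [hfix, ← expWeighted_apply _ p hs]
    _ = weightedMean k (F p (ext (hΦ.fixedPoint Φ) p)) s :=
        mul_inv_cancel_left₀ (exp_pos _).ne' _

end FixedPoint

/-! ### The regularised profile system -/

lemma mul_sinc (y : ℝ) : y * sinc y = sin y := by
  rcases eq_or_ne y 0 with rfl | hy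
  · simp
  · rw [sinc_of_ne_zero hy, mul_div_cancel₀ _ hy]

lemma sinc_eq_weightedMean (y : ℝ) : sinc y = weightedMean 0 (fun t => cos (t * y)) 1 := by
  rcases eq_or_ne y 0 with rfl | hy
  · simp [weightedMean]
  · simp only [weightedMean, pow_zero, one_mul]
    rw [intervalIntegral.integral_comp_mul_right _ hy, integral_cos, sinc_of_ne_zero hy]
    simp [div_eq_inv_mul]

lemma abs_weightedMean_sub_le_const {k : ℕ} {f g : ℝ → ℝ} (hf : Continuous f) (hg : Continuous g)
    {s D : ℝ} (hs : 0 ≤ s) (h : ∀ t ∈ Icc 0 s, |f t - g t| ≤ D) :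
    |weightedMean k f s - weightedMean k g s| ≤ D :=
  (abs_weightedMean_sub_le k hf hg continuous_const hs h).trans_eq (by simp [weightedMean])

lemma abs_sinc_sub_sinc_le (y z : ℝ) : |sinc y - sinc z| ≤ |y - z| := by
  rw [sinc_eq_weightedMean, sinc_eq_weightedMean]
  refine abs_weightedMean_sub_le_const (by fun_prop) (by fun_prop) zero_le_one fun t ht => ?_
  refine (abs_cos_sub_cos_le _ _).trans ?_
  rw [← mul_sub, abs_mul, abs_of_nonneg ht.1]
  exact mul_le_of_le_one_left (abs_nonneg _) ht.2

namespace ProfileCurve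

/-- The ratio `μ / ψ` between the rotational curvature and `ψ = (θ - π / 2) / s`. The denominator is
`r / s`, truncated at `ε` so that the ratio depends in a Lipschitz way on `ψ`. -/
noncomputable def curvatureRatio (ε : ℝ) (ψ : ℝ → ℝ) (s : ℝ) : ℝ :=
  sinc (s * ψ s) / max (weightedMean 0 (fun t => cos (t * ψ t)) s) ε

/-- The curve with tangent angle `π / 2 + s * ψ s` starting from `(e, 0)`. Its
rotational curvature is `-cos θ / r` only where `r s ≥ ε * s`. -/
noncomputable def ofAngle (e ε : ℝ) (ψ : ℝ → ℝ) : ProfileCurve where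
  x s := e - ∫ t in (0 : ℝ)..s, sin (t * ψ t)
  r s := ∫ t in (0 : ℝ)..s, cos (t * ψ t)
  θ s := π / 2 + s * ψ s
  μ s := ψ s * curvatureRatio ε ψ s

variable (k : ℕ) (lam e ε : ℝ) (ψ : ℝ → ℝ)

/-- The right-hand side of the regular singular equation `s * ψ' + (k + 1) * ψ = forcing` to which
the equation `θ' = κ` reduces. -/
noncomputable def forcing (s : ℝ) : ℝ := (ofAngle e ε ψ).κ k lam s + k * ψ s

lemma c_ofAngle (s : ℝ) : (ofAngle e ε ψ).c s = sin (s * ψ s) := by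
  simp only [c, ofAngle, add_comm (π / 2), cos_add_pi_div_two, neg_neg]

lemma σ_ofAngle (s : ℝ) : (ofAngle e ε ψ).σ s = cos (s * ψ s) := by
  simp only [σ, ofAngle, add_comm (π / 2), sin_add_pi_div_two]

lemma forcing_eq (s : ℝ) : forcing k lam e ε ψ s =
    (e - ∫ t in (0 : ℝ)..s, sin (t * ψ t)) * cos (s * ψ s)
      + (∫ t in (0 : ℝ)..s, cos (t * ψ t)) * sin (s * ψ s) + lam
      + k * (ψ s * (1 - curvatureRatio ε ψ s)) := by
  rw [forcing, κ, c_ofAngle, σ_ofAngle, ofAngle]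
  ring

section Lipschitz

variable {u v : ℝ → ℝ} {s M : ℝ}

lemma abs_mul_sub_mul_le (hs : 0 ≤ s) (h : |u s - v s| ≤ M) :
    |s * u s - s * v s| ≤ s * M := by
  rw [← mul_sub, abs_mul, abs_of_nonneg hs]
  gcongr

lemma abs_integral_comp_sub_le {f : ℝ → ℝ} (hf : Continuous f)
    (hf1 : ∀ y z, |f y - f z| ≤ |y - z|) (hu : Continuous u) (hv : Continuous v)
    (hs : 0 ≤ s) (h : ∀ t ∈ Icc 0 s, |u t - v t| ≤ M) :
    |(∫ t in (0 : ℝ)..s, f (t * u t)) - ∫ t in (0 : ℝ)..s, f (t * v t)| ≤ s * (s * M) := by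
  have hint {w : ℝ → ℝ} (hw : Continuous w) :
      IntervalIntegrable (fun t => f (t * w t)) MeasureTheory.volume 0 s :=
    (hf.comp (continuous_id.mul hw)).intervalIntegrable 0 s
  rw [← intervalIntegral.integral_sub (hint hu) (hint hv), ← norm_eq_abs]
  refine (intervalIntegral.norm_integral_le_of_norm_le_const (C := s * M) fun t ht => ?_).trans_eq
    (by rw [sub_zero, abs_of_nonneg hs, mul_comm])
  rw [uIoc_of_le hs] at ht
  have hM : 0 ≤ M := (abs_nonneg _).trans (h 0 ⟨le_rfl, hs⟩)
  refine (hf1 _ _).trans ((abs_mul_sub_mul_le ht.1.le (h t (Ioc_subset_Icc_self ht))).trans ?_)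
  gcongr
  exact ht.2

lemma abs_div_max_sub_div_max_le {a a' b b' D : ℝ} (hε : 0 < ε) (ha : |a - a'| ≤ D)
    (hb : |b - b'| ≤ D) (ha' : |a'| ≤ 1) :
    |a / max b ε - a' / max b' ε| ≤ (1 / ε + 1 / ε ^ 2) * D := by
  have hD : 0 ≤ D := (abs_nonneg _).trans ha
  have hd : ε ≤ max b ε := le_max_right _ _
  have hd' : ε ≤ max b' ε := le_max_right _ _
  have hdd : |max b' ε - max b ε| ≤ D :=
    (abs_max_sub_max_le_abs b' b ε).trans ((abs_sub_comm b' b).trans_le hb)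
  have hpos := hε.trans_le hd
  have hpos' := hε.trans_le hd'
  calc |a / max b ε - a' / max b' ε|
      = |(a - a') / max b ε + a' * (max b' ε - max b ε) / (max b ε * max b' ε)| := by
        congr 1
        field_simp
        ring
    _ ≤ |a - a'| / max b ε + |a'| * |max b' ε - max b ε| / (max b ε * max b' ε) := by
        refine (abs_add_le _ _).trans_eq ?_
        rw [abs_div, abs_div, abs_mul, abs_of_pos hpos, abs_of_pos (mul_pos hpos hpos')]
    _ ≤ D / ε + 1 * D / (ε * ε) := by gcongr
    _ = (1 / ε + 1 / ε ^ 2) * D := by ring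

lemma abs_curvatureRatio_sub_le (hε : 0 < ε) (hu : Continuous u) (hv : Continuous v)
    (hs : 0 ≤ s) (h : ∀ t ∈ Icc 0 s, |u t - v t| ≤ M) :
    |curvatureRatio ε u s - curvatureRatio ε v s| ≤ (1 / ε + 1 / ε ^ 2) * (s * M) := by
  have hM : 0 ≤ M := (abs_nonneg _).trans (h 0 ⟨le_rfl, hs⟩)
  refine abs_div_max_sub_div_max_le ε hε ((abs_sinc_sub_sinc_le _ _).trans
    (abs_mul_sub_mul_le hs (h s ⟨hs, le_rfl⟩))) ?_ (abs_sinc_le_one _)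
  refine abs_weightedMean_sub_le_const (by fun_prop) (by fun_prop) hs fun t ht => ?_
  refine (abs_cos_sub_cos_le _ _).trans ((abs_mul_sub_mul_le ht.1 (h t ht)).trans ?_)
  gcongr
  exact ht.2

lemma curvatureRatio_zero (hε : ε ≤ 1) : curvatureRatio ε (fun _ => 0) s = 1 := by
  simp [curvatureRatio, weightedMean, hε]

lemma abs_mul_one_sub_curvatureRatio_sub_le {B : ℝ} (hε : 0 < ε) (hε1 : ε ≤ 1)
    (hu : Continuous u) (hv : Continuous v) (huB : ∀ t, |u t| ≤ B) (hvB : ∀ t, |v t| ≤ B)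
    (hs : 0 ≤ s) (h : ∀ t ∈ Icc 0 s, |u t - v t| ≤ M) :
    |u s * (1 - curvatureRatio ε u s) - v s * (1 - curvatureRatio ε v s)| ≤
      2 * B * (1 / ε + 1 / ε ^ 2) * (s * M) := by
  have hM : 0 ≤ M := (abs_nonneg _).trans (h 0 ⟨le_rfl, hs⟩)
  have huv := abs_curvatureRatio_sub_le ε hε hv hu hs fun t ht =>
    (abs_sub_comm (v t) (u t)).trans_le (h t ht)
  have hone : |1 - curvatureRatio ε v s| ≤ (1 / ε + 1 / ε ^ 2) * (s * B) := by
    have hzero := abs_curvatureRatio_sub_le ε hε (u := fun _ => 0) continuous_const hv hs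
      fun t _ => by simpa only [zero_sub, abs_neg] using hvB t
    rwa [curvatureRatio_zero ε hε1] at hzero
  calc |u s * (1 - curvatureRatio ε u s) - v s * (1 - curvatureRatio ε v s)|
      = |u s * (curvatureRatio ε v s - curvatureRatio ε u s)
          + (u s - v s) * (1 - curvatureRatio ε v s)| := by ring_nf
    _ ≤ |u s| * |curvatureRatio ε v s - curvatureRatio ε u s|
          + |u s - v s| * |1 - curvatureRatio ε v s| := by
        rw [← abs_mul, ← abs_mul]
        exact abs_add_le _ _
    _ ≤ B * ((1 / ε + 1 / ε ^ 2) * (s * M)) + M * ((1 / ε + 1 / ε ^ 2) * (s * B)) := by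
        have hB : 0 ≤ B := (abs_nonneg _).trans (huB 0)
        gcongr
        exacts [huB s, h s ⟨hs, le_rfl⟩]
    _ = 2 * B * (1 / ε + 1 / ε ^ 2) * (s * M) := by ring

lemma abs_mul_sub_mul_le_of_le {a b a' b' A D E : ℝ} (hb : |b| ≤ 1) (ha' : |a'| ≤ A)
    (ha : |a - a'| ≤ D) (hbb : |b - b'| ≤ E) : |a * b - a' * b'| ≤ D + A * E := by
  calc |a * b - a' * b'| = |(a - a') * b + a' * (b - b')| := by ring_nf
    _ ≤ |a - a'| * |b| + |a'| * |b - b'| := by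
        rw [← abs_mul, ← abs_mul]
        exact abs_add_le _ _
    _ ≤ D * 1 + A * E := by
        have := (abs_nonneg _).trans ha
        have := (abs_nonneg _).trans ha'
        gcongr
    _ = D + A * E := by rw [mul_one]

lemma abs_integral_le {f : ℝ → ℝ} (hf : ∀ y, |f y| ≤ 1) (hs : 0 ≤ s) :
    |∫ t in (0 : ℝ)..s, f t| ≤ s := by
  simpa [abs_of_nonneg hs] using
    intervalIntegral.norm_integral_le_of_norm_le_const (a := 0) (b := s)
      (f := f) (C := 1) fun t _ => hf t

lemma abs_forcing_sub_le {T B E : ℝ} (he : |e| ≤ E) (hε : 0 < ε) (hε1 : ε ≤ 1)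
    (hu : Continuous u) (hv : Continuous v) (huB : ∀ t, |u t| ≤ B) (hvB : ∀ t, |v t| ≤ B)
    (hs : s ∈ Icc 0 T) (h : ∀ t ∈ Icc 0 s, |u t - v t| ≤ M) :
    |forcing k lam e ε u s - forcing k lam e ε v s| ≤
      (E + 4 * T + k * (2 * B * (1 / ε + 1 / ε ^ 2))) * s * M := by
  have hM : 0 ≤ M := (abs_nonneg _).trans (h 0 ⟨le_rfl, hs.1⟩)
  have hsM : 0 ≤ s * M := mul_nonneg hs.1 hM
  have hangle := abs_mul_sub_mul_le hs.1 (h s ⟨hs.1, le_rfl⟩)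
  have hx : |(e - ∫ t in (0 : ℝ)..s, sin (t * u t)) * cos (s * u s)
      - (e - ∫ t in (0 : ℝ)..s, sin (t * v t)) * cos (s * v s)|
      ≤ s * (s * M) + (E + s) * (s * M) :=
    abs_mul_sub_mul_le_of_le (abs_cos_le_one _)
      ((abs_sub _ _).trans (add_le_add he (abs_integral_le (fun _ => abs_sin_le_one _) hs.1)))
      (by
        rw [sub_sub_sub_cancel_left, abs_sub_comm]
        exact abs_integral_comp_sub_le continuous_sin abs_sin_sub_sin_le hu hv hs.1 h)
      ((abs_cos_sub_cos_le _ _).trans hangle)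
  have hr : |(∫ t in (0 : ℝ)..s, cos (t * u t)) * sin (s * u s)
      - (∫ t in (0 : ℝ)..s, cos (t * v t)) * sin (s * v s)| ≤ s * (s * M) + s * (s * M) :=
    abs_mul_sub_mul_le_of_le (abs_sin_le_one _)
      (abs_integral_le (fun _ => abs_cos_le_one _) hs.1)
      (abs_integral_comp_sub_le continuous_cos abs_cos_sub_cos_le hu hv hs.1 h)
      ((abs_sin_sub_sin_le _ _).trans hangle)
  have hk := abs_mul_one_sub_curvatureRatio_sub_le ε hε hε1 hu hv huB hvB hs.1 h
  have hTM : s * (s * M) ≤ T * (s * M) := mul_le_mul_of_nonneg_right hs.2 hsM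
  rw [forcing_eq, forcing_eq, abs_le]
  rw [abs_le] at hx hr hk
  have hk₁ := mul_le_mul_of_nonneg_left hk.1 k.cast_nonneg
  have hk₂ := mul_le_mul_of_nonneg_left hk.2 k.cast_nonneg
  constructor <;> linarith [hx.1, hx.2, hr.1, hr.2]

end Lipschitz

section Continuity

variable {P : Type*} [TopologicalSpace P] {k lam ε} {a : P → ℝ} {φ : P → ℝ → ℝ}

lemma continuous_integral_comp_mul {f : ℝ → ℝ} (hf : Continuous f) (hφ : Continuous ↿φ) :
    Continuous fun z : P × ℝ => ∫ t in (0 : ℝ)..z.2, f (t * φ z.1 t) :=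
  intervalIntegral.continuous_parametric_intervalIntegral_of_continuous
    (f := fun (z : P × ℝ) t => f (t * φ z.1 t))
    (hf.comp (continuous_snd.mul (hφ.comp
      (by fun_prop : Continuous fun w : (P × ℝ) × ℝ => (w.1.1, w.2))))) continuous_snd

lemma continuous_x_ofAngle (ha : Continuous a) (hφ : Continuous ↿φ) :
    Continuous fun z : P × ℝ => (ofAngle (a z.1) ε (φ z.1)).x z.2 :=
  (ha.comp continuous_fst).sub (continuous_integral_comp_mul continuous_sin hφ)

lemma continuous_mean_cos (hφ : Continuous ↿φ) :
    Continuous fun z : P × ℝ => weightedMean 0 (fun t => cos (t * φ z.1 t)) z.2 :=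
  continuous_weightedMean_uncurry 0 (h := fun p t => cos (t * φ p t))
    (continuous_cos.comp (continuous_snd.mul hφ))

lemma continuous_curvatureRatio (hε : 0 < ε) (hφ : Continuous ↿φ) :
    Continuous fun z : P × ℝ => curvatureRatio ε (φ z.1) z.2 :=
  (continuous_sinc.comp (continuous_snd.mul hφ)).div
    ((continuous_mean_cos hφ).max continuous_const)
    fun _ => (hε.trans_le (le_max_right _ _)).ne'

lemma continuous_forcing_uncurry (hε : 0 < ε) (ha : Continuous a) (hφ : Continuous ↿φ) :
    Continuous ↿fun p => forcing k lam (a p) ε (φ p) := by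
  have hangle : Continuous fun z : P × ℝ => z.2 * φ z.1 z.2 := continuous_snd.mul hφ
  change Continuous fun z : P × ℝ => forcing k lam (a z.1) ε (φ z.1) z.2
  simp only [forcing_eq]
  exact ((((continuous_x_ofAngle (ε := ε) ha hφ).mul (continuous_cos.comp hangle)).add
    ((continuous_integral_comp_mul continuous_cos hφ).mul (continuous_sin.comp hangle))).add
    continuous_const).add
    (continuous_const.mul (hφ.mul (continuous_const.sub (continuous_curvatureRatio hε hφ))))

end Continuity

theorem exists_truncated_solution {P : Type*} [TopologicalSpace P] [CompactSpace P] {k : ℕ}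
    {lam ε T B : ℝ} {a : P → ℝ} (ha : Continuous a) (hε : 0 < ε) (hε1 : ε ≤ 1) (hT : 0 < T)
    (hB : 0 ≤ B) :
    ∃ φ : P → ℝ → ℝ, Continuous ↿φ ∧ ∀ p, ∀ s ∈ Icc 0 T,
      |weightedMean k (forcing k lam (a p) ε (φ p)) s| ≤ B →
      φ p s = weightedMean k (forcing k lam (a p) ε (φ p)) s := by
  obtain ⟨E, hE⟩ := isCompact_univ.exists_bound_of_continuousOn ha.continuousOn
  simp only [mem_univ, norm_eq_abs, true_implies] at hE
  have hBB : -B ≤ B := neg_le_self hB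
  let clamp (u : ℝ → ℝ) (s : ℝ) : ℝ := projIcc (-B) B hBB (u s)
  have hclamp (u s) : |clamp u s| ≤ B := abs_le.2 (projIcc (-B) B hBB (u s)).2
  have hclamp_cont {u : ℝ → ℝ} (hu : Continuous u) : Continuous (clamp u) :=
    continuous_subtype_val.comp (continuous_projIcc.comp hu)
  have hclamp_cont' {U : P → ℝ → ℝ} (hU : Continuous ↿U) : Continuous ↿fun p => clamp (U p) :=
    continuous_subtype_val.comp (continuous_projIcc.comp hU)
  obtain ⟨U, hU, hfix⟩ := exists_eq_weightedMean k
    (F := fun p u => forcing k lam (a p) ε (clamp u))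
    (C := |E| + 4 * T + k * (2 * B * (1 / ε + 1 / ε ^ 2))) (by positivity) hT.le
    (fun u hu => continuous_forcing_uncurry hε ha (hclamp_cont' hu))
    fun p u v hu hv s hs M h => abs_forcing_sub_le k lam (a p) ε
      ((hE p).trans (le_abs_self E)) hε hε1 (hclamp_cont hu) (hclamp_cont hv) (hclamp u) (hclamp v)
      hs fun t ht => (abs_projIcc_sub_projIcc hBB).trans (h t ht)
  refine ⟨fun p => clamp (U p), hclamp_cont' hU, fun p s hs hle => ?_⟩
  rw [← hfix p s hs] at hle ⊢
  exact congrArg Subtype.val (projIcc_of_mem hBB (abs_le.1 hle))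

variable {k lam e ε ψ} {m S : ℝ}

/-- `ofAngle e ε ψ` with its tangent angle replaced by `π / 2 + s * Ψ s`, where `Ψ` is the mean of
`forcing`. It solves the profile system where `ψ = Ψ`, and its tangent angle is differentiable
everywhere, in particular at `0`. -/
noncomputable def ofForcing (k : ℕ) (lam e ε : ℝ) (ψ : ℝ → ℝ) : ProfileCurve where
  __ := ofAngle e ε ψ
  θ s := π / 2 + s * weightedMean k (forcing k lam e ε ψ) s

lemma θ_ofForcing {s : ℝ} (hψ : ψ s = weightedMean k (forcing k lam e ε ψ) s) :
    (ofForcing k lam e ε ψ).θ s = (ofAngle e ε ψ).θ s :=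
  congrArg (fun y => π / 2 + s * y) hψ.symm

lemma c_ofForcing {s : ℝ} (hψ : ψ s = weightedMean k (forcing k lam e ε ψ) s) :
    (ofForcing k lam e ε ψ).c s = sin (s * ψ s) := by
  rw [c, θ_ofForcing hψ, ← c_ofAngle e ε, c]

lemma σ_ofForcing {s : ℝ} (hψ : ψ s = weightedMean k (forcing k lam e ε ψ) s) :
    (ofForcing k lam e ε ψ).σ s = cos (s * ψ s) := by
  rw [σ, θ_ofForcing hψ, ← σ_ofAngle e ε, σ]

lemma continuous_forcing (hε : 0 < ε) (hψc : Continuous ψ) :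
    Continuous (forcing k lam e ε ψ) :=
  (continuous_forcing_uncurry (P := Unit) (a := fun _ => e) (φ := fun _ => ψ) hε continuous_const
    (hψc.comp continuous_snd)).comp (Continuous.prodMk_right ())

lemma hasDerivAt_θ_ofForcing (hε : 0 < ε) (hψc : Continuous ψ) {s : ℝ}
    (hψ : ψ s = weightedMean k (forcing k lam e ε ψ) s) :
    HasDerivAt (ofForcing k lam e ε ψ).θ ((ofForcing k lam e ε ψ).κ k lam s) s := by
  refine HasDerivAt.congr_deriv
    ((hasDerivAt_mul_weightedMean k (continuous_forcing hε hψc) s).const_add (π / 2)) ?_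
  rw [← hψ, forcing, add_sub_cancel_right, κ, κ, c_ofForcing hψ, σ_ofForcing hψ, c_ofAngle,
    σ_ofAngle]
  rfl

lemma continuous_μ_ofForcing (hε : 0 < ε) (hψc : Continuous ψ) :
    Continuous (ofForcing k lam e ε ψ).μ :=
  hψc.mul ((continuous_curvatureRatio (P := Unit) (φ := fun _ => ψ) hε
    (hψc.comp continuous_snd)).comp (Continuous.prodMk_right ()))

lemma r_ofForcing (s : ℝ) :
    (ofForcing k lam e ε ψ).r s = s * weightedMean 0 (fun t => cos (t * ψ t)) s := by
  simpa [ofForcing, ofAngle] using (pow_succ_mul_weightedMean 0 (fun t => cos (t * ψ t)) s).symm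

lemma curvatureRatio_at_zero (hε1 : ε ≤ 1) : curvatureRatio ε ψ 0 = 1 := by
  simp [curvatureRatio, weightedMean, hε1]

lemma weightedMean_forcing_zero (hε1 : ε ≤ 1) :
    weightedMean k (forcing k lam ((k + 1) * m - lam) ε ψ) 0 = m := by
  rw [weightedMean_zero, forcing_eq, curvatureRatio_at_zero hε1]
  simp only [intervalIntegral.integral_same, sub_zero, zero_mul, cos_zero, mul_one, add_zero,
    sub_self, mul_zero, sub_add_cancel]
  field_simp

theorem isArc_ofForcing (hψc : Continuous ψ) (hε : 0 < ε) (hε1 : ε ≤ 1) (hS : 0 < S) (hm : 0 < m)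
    (hψ : ∀ s ∈ Icc 0 S, ψ s = weightedMean k (forcing k lam ((k + 1) * m - lam) ε ψ) s)
    (hρ : ∀ s ∈ Icc 0 S, ε ≤ weightedMean 0 (fun t => cos (t * ψ t)) s)
    (hθ : ∀ s ∈ Icc 0 S, (ofForcing k lam ((k + 1) * m - lam) ε ψ).θ s ≤ π) :
    (ofForcing k lam ((k + 1) * m - lam) ε ψ).IsArc k lam m S where
  length_pos := hS
  curvature_pos := hm
  hasDerivAt_x s hs := by
    rw [c_ofForcing (hψ s hs)]
    exact ((by fun_prop : Continuous fun t => sin (t * ψ t)).integral_hasStrictDerivAt 0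
      s).hasDerivAt.const_sub _
  hasDerivAt_r s hs := by
    rw [σ_ofForcing (hψ s hs)]
    exact ((by fun_prop : Continuous fun t => cos (t * ψ t)).integral_hasStrictDerivAt 0
      s).hasDerivAt
  hasDerivAt_θ s hs := hasDerivAt_θ_ofForcing hε hψc (hψ s hs)
  continuousOn_μ := (continuous_μ_ofForcing hε hψc).continuousOn
  c_eq s hs := by
    have hρs := hρ s hs
    have hpos := (hε.trans_le hρs).ne'
    rw [c_ofForcing (hψ s hs), r_ofForcing, ← mul_sinc]
    simp only [ofForcing, ofAngle, curvatureRatio, max_eq_left hρs]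
    field_simp
  x_zero := by simp [ofForcing, ofAngle]
  r_zero := by simp [ofForcing, ofAngle]
  θ_zero := by simp [ofForcing]
  μ_zero := by
    change ψ 0 * curvatureRatio ε ψ 0 = m
    rw [hψ 0 ⟨le_rfl, hS.le⟩, curvatureRatio_at_zero hε1, weightedMean_forcing_zero hε1, mul_one]
  r_pos s hs := by
    rw [r_ofForcing]
    exact mul_pos hs.1 (hε.trans_le (hρ s (Ioc_subset_Icc_self hs)))
  θ_le := hθ

/-! ### A priori bounds -/

namespace IsArc

variable {γ : ProfileCurve} {s : ℝ}

lemma r_le (h : γ.IsArc k lam m S) (hs : s ∈ Icc 0 S) : γ.r s ≤ s := by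
  have hmono : MonotoneOn (fun s => s - γ.r s) (Icc 0 S) :=
    monotoneOn_Icc_of_hasDerivAt_nonneg (continuousOn_id.sub h.continuousOn_r)
      (fun s hs => (hasDerivAt_id s).sub (h.hasDerivAt_r s (Ioo_subset_Icc_self hs)))
      fun s _ => sub_nonneg.2 (σ_le_one s)
  have hle := hmono h.left_mem hs hs.1
  simp only [h.r_zero, sub_zero] at hle
  exact sub_nonneg.1 hle

lemma x_zero_sub_length_le (h : γ.IsArc k lam m S) (hs : s ∈ Icc 0 S) :
    (k + 1) * m - lam - s ≤ γ.x s := by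
  have hmono : MonotoneOn (fun s => γ.x s + s) (Icc 0 S) :=
    monotoneOn_Icc_of_hasDerivAt_nonneg (h.continuousOn_x.add continuousOn_id)
      (fun s hs => (h.hasDerivAt_x s (Ioo_subset_Icc_self hs)).add (hasDerivAt_id s))
      fun s _ => by linarith [neg_one_le_cos (γ.θ s), show γ.c s = -cos (γ.θ s) from rfl]
  have hle := hmono h.left_mem hs hs.1
  simp only [h.x_zero, add_zero] at hle
  linarith

lemma half_length_le_r (h : γ.IsArc k lam m S) (hc : γ.c S ≤ 1 / 2) : S / 2 ≤ γ.r S := by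
  have hmono : MonotoneOn (fun s => γ.r s - s * (1 / 2)) (Icc 0 S) :=
    monotoneOn_Icc_of_hasDerivAt_nonneg (h.continuousOn_r.sub (by fun_prop))
      (fun s hs => (h.hasDerivAt_r s (Ioo_subset_Icc_self hs)).sub
        ((hasDerivAt_id s).mul_const (1 / 2))) fun s hs => by
        have hsI := Ioo_subset_Icc_self hs
        linarith [h.half_lt_σ hsI ((h.monotoneOn_c hsI h.right_mem hs.2.le).trans hc)]
  have hle := hmono h.left_mem h.right_mem h.length_pos.le
  simp only [h.r_zero] at hle
  linarith

lemma sub_mul_c_le (h : γ.IsArc k lam m S) (hx : 0 ≤ γ.x S) {a : ℝ} (ha : a ∈ Icc 0 S) :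
    (S - a) * γ.c a ≤ (k + 1) * m - lam := by
  have hsub : Icc a S ⊆ Icc 0 S := Icc_subset_Icc_left ha.1
  have hmono : MonotoneOn (fun s => -γ.x s - s * γ.c a) (Icc a S) :=
    monotoneOn_Icc_of_hasDerivAt_nonneg ((h.continuousOn_x.mono hsub).neg.sub (by fun_prop))
      (fun s hs => (h.hasDerivAt_x s (hsub (Ioo_subset_Icc_self hs))).neg.sub
        ((hasDerivAt_id s).mul_const (γ.c a))) fun s hs => by
        linarith [h.monotoneOn_c ha (hsub (Ioo_subset_Icc_self hs)) hs.1.le]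
  have hle := hmono (left_mem_Icc.2 ha.2) (right_mem_Icc.2 ha.2) ha.2
  have hxa := h.x_le ha
  simp only at hle
  linarith

lemma hasDerivAt_r_pow_mul_c (h : γ.IsArc k lam m S) (hs : s ∈ Icc 0 S) :
    HasDerivAt (fun s => γ.r s ^ k * γ.c s)
      (γ.r s ^ k * γ.σ s * (γ.x s * γ.σ s + γ.r s * γ.c s + lam)) s := by
  refine (((h.hasDerivAt_r s hs).fun_pow k).mul (h.hasDerivAt_c hs)).congr_deriv ?_
  rw [h.c_eq s hs, κ, h.c_eq s hs]
  rcases k with _ | k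
  · simp only [CharP.cast_eq_zero, pow_zero]
    ring
  · simp only [Nat.add_sub_cancel]
    ring

lemma half_mul_r_le_c (h : γ.IsArc k lam m S) (hx₀ : lam ≤ (k + 1) * m)
    (hS : S + ((k + 1) * m - lam) * γ.c S ≤ (k + 1) * m / 2) : m / 2 * γ.r S ≤ γ.c S := by
  have hmono : MonotoneOn (fun s => γ.r s ^ k * γ.c s - m / 2 * γ.r s ^ (k + 1)) (Icc 0 S) := by
    refine monotoneOn_Icc_of_hasDerivAt_nonneg
      (((h.continuousOn_r.pow _).mul h.continuousOn_c).sub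
        (continuousOn_const.mul (h.continuousOn_r.pow _)))
      (fun s hs => (h.hasDerivAt_r_pow_mul_c (Ioo_subset_Icc_self hs)).sub
        (((h.hasDerivAt_r s (Ioo_subset_Icc_self hs)).fun_pow (k + 1)).const_mul _)) fun s hs => ?_
    have hsI := Ioo_subset_Icc_self hs
    have hr := h.r_nonneg hsI
    have hσ := h.σ_nonneg hsI
    have hc := h.c_nonneg hsI
    have hx := h.x_zero_sub_length_le hsI
    have hσc : 1 - γ.c s ≤ γ.σ s := by nlinarith [γ.c_sq_add_σ_sq s]
    have hcS := mul_le_mul_of_nonneg_left (h.monotoneOn_c hsI h.right_mem hs.2.le)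
      (sub_nonneg.2 hx₀)
    have hmean : (k + 1) * m / 2 ≤ γ.x s * γ.σ s + γ.r s * γ.c s + lam := by
      nlinarith [h.x_le hsI, σ_le_one (γ := γ) s, mul_nonneg hr hc, hs.1, hs.2]
    simp only [Nat.add_sub_cancel, Nat.cast_add, Nat.cast_one]
    nlinarith [mul_le_mul_of_nonneg_left hmean (mul_nonneg (pow_nonneg hr k) hσ)]
  have hle := hmono h.left_mem h.right_mem h.length_pos.le
  simp only [h.r_zero, h.c_zero, zero_pow k.succ_ne_zero, mul_zero, sub_zero, sub_nonneg] at hle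
  refine le_of_mul_le_mul_left ?_ (pow_pos (h.r_pos S (right_mem_Ioc.2 h.length_pos)) k)
  calc γ.r S ^ k * (m / 2 * γ.r S) = m / 2 * γ.r S ^ (k + 1) := by ring
    _ ≤ γ.r S ^ k * γ.c S := hle

lemma θ_sub_le (h : γ.IsArc k lam m S) (hs : s ∈ Icc 0 S) :
    γ.θ s - π / 2 ≤ π / 2 * γ.c s := by
  have hsin := mul_le_sin (sub_nonneg.2 (h.pi_div_two_le_θ hs)) (by linarith [h.θ_le s hs])
  rw [sin_sub_pi_div_two, ← c] at hsin
  calc γ.θ s - π / 2 = π / 2 * (2 / π * (γ.θ s - π / 2)) := by field_simp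
    _ ≤ π / 2 * γ.c s := by gcongr

/- The tangent has turned by a definite angle at `s = a`; from then on `x` drops at a
definite rate. -/
lemma length_le (h : γ.IsArc k lam m S) (hx₀ : lam ≤ (k + 1) * m) (hx : 0 ≤ γ.x S) {a : ℝ}
    (ha : 0 < a) (hc : (k + 1) * m * a * exp (a ^ 2 / 2) ≤ 1 / 2)
    (hac : a + ((k + 1) * m - lam) * ((k + 1) * m * a * exp (a ^ 2 / 2)) ≤ (k + 1) * m / 2) :
    S ≤ a + 4 * ((k + 1) * m - lam) / (m * a) := by
  have hm := h.curvature_pos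
  rcases le_or_gt S a with hSa | haS
  · have := sub_nonneg.2 hx₀
    exact hSa.trans (le_add_of_nonneg_right (by positivity))
  have haI : a ∈ Icc 0 S := ⟨ha.le, haS.le⟩
  have hca := h.c_le_of_r_le hx₀ haI (h.r_le haI)
  have ha' := h.restrict ⟨ha, haS.le⟩
  have hr := ha'.half_length_le_r (hca.trans hc)
  have hμ := ha'.half_mul_r_le_c hx₀
    ((add_le_add_right (mul_le_mul_of_nonneg_left hca (sub_nonneg.2 hx₀)) a).trans hac)
  have hturn : m * a / 4 ≤ γ.c a := by nlinarith
  rw [← sub_le_iff_le_add', le_div_iff₀ (by positivity)]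
  linarith [mul_le_mul_of_nonneg_left hturn (sub_nonneg.2 haS.le), h.sub_mul_c_le hx haI]

lemma min_div_two_le_r (h : γ.IsArc k lam m S) (hx₀ : lam ≤ (k + 1) * m) {a : ℝ}
    (ha : 0 < a) (hc : (k + 1) * m * a * exp (a ^ 2 / 2) ≤ 1 / 2) : min S a / 2 ≤ γ.r S := by
  have hb : min S a ∈ Ioc 0 S := ⟨lt_min h.length_pos ha, min_le_left _ _⟩
  have hbI := Ioc_subset_Icc_self hb
  have hcb := h.c_le_of_r_le hx₀ hbI ((h.r_le hbI).trans (min_le_right _ _))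
  exact ((h.restrict hb).half_length_le_r (hcb.trans hc)).trans
    (h.monotoneOn_r hbI h.right_mem hb.2)

end IsArc

lemma exists_initial_scale (k : ℕ) {lam mA mB : ℝ} (hlam : lam ≤ 0) (hA : 0 < mA)
    (hAB : mA ≤ mB) : ∃ a > 0, ∀ m ∈ Icc mA mB, (k + 1) * m * a * exp (a ^ 2 / 2) ≤ 1 / 2 ∧
      a + ((k + 1) * m - lam) * ((k + 1) * m * a * exp (a ^ 2 / 2)) ≤ (k + 1) * m / 2 := by
  obtain ⟨a, ⟨hc, hac⟩, ha : 0 < a⟩ :=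
    ((((eventually_nhdsGT_zero_lt (f := fun a => (k + 1) * mB * a * exp (a ^ 2 / 2))
      (by fun_prop) (by simp) one_half_pos)).and
      (eventually_nhdsGT_zero_lt (f := fun a => a + ((k + 1) * mB - lam)
        * ((k + 1) * mB * a * exp (a ^ 2 / 2))) (by fun_prop) (by simp)
        (by positivity : 0 < (k + 1) * mA / 2))).and self_mem_nhdsWithin).exists
  refine ⟨a, ha, fun m ⟨hmA, hmB⟩ => ?_⟩
  have hm := hA.trans_le hmA
  have hx₀ : 0 ≤ (k + 1) * mB - lam := sub_nonneg.2 (hlam.trans (by nlinarith))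
  have hD : (k + 1) * m * a * exp (a ^ 2 / 2) ≤ (k + 1) * mB * a * exp (a ^ 2 / 2) := by gcongr
  refine ⟨hD.trans hc.le, ?_⟩
  calc a + ((k + 1) * m - lam) * ((k + 1) * m * a * exp (a ^ 2 / 2))
      ≤ a + ((k + 1) * mB - lam) * ((k + 1) * mB * a * exp (a ^ 2 / 2)) := by gcongr
    _ ≤ (k + 1) * mA / 2 := hac.le
    _ ≤ (k + 1) * m / 2 := by gcongr

theorem exists_bounds (k : ℕ) {lam mA mB : ℝ} (hlam : lam ≤ 0) (hA : 0 < mA) (hAB : mA ≤ mB) :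
    ∃ T B ε : ℝ, 0 < T ∧ mB < B ∧ 0 < ε ∧ ε < 1 ∧ ∀ m ∈ Icc mA mB, ∀ (γ : ProfileCurve) (S : ℝ),
      γ.IsArc k lam m S → 0 ≤ γ.x S → S < T ∧ γ.θ S - π / 2 < B * S ∧ ε * S < γ.r S := by
  have hB := hA.trans_le hAB
  obtain ⟨a, ha, hscale⟩ := exists_initial_scale k hlam hA hAB
  let T := a + 4 * ((k + 1) * mB - lam) / (mA * a) + 1
  have hY : 0 ≤ (k + 1) * mB - lam := sub_nonneg.2 (hlam.trans (by positivity))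
  have haT : a < T := lt_add_of_le_of_pos (le_add_of_nonneg_right (by positivity)) one_pos
  have hT := ha.trans haT
  refine ⟨T, 2 * ((k + 1) * mB * exp (T ^ 2 / 2)), a / (4 * T), hT, ?_, by positivity, ?_, ?_⟩
  · have hexp : 1 ≤ exp (T ^ 2 / 2) := one_le_exp (by positivity)
    nlinarith [mul_nonneg (k.cast_nonneg (α := ℝ)) hB.le]
  · rw [div_lt_one (by positivity)]
    linarith
  intro m hm γ S h hx
  have hmpos := h.curvature_pos
  have hSpos := h.length_pos
  have hx₀ : lam ≤ (k + 1) * m := hlam.trans (by positivity)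
  obtain ⟨hc, hac⟩ := hscale m hm
  obtain ⟨hmA, hmB⟩ := hm
  have hST : S < T := by
    refine (h.length_le hx₀ hx ha hc hac).trans_lt (lt_add_of_le_of_pos ?_ one_pos)
    gcongr
  refine ⟨hST, ?_, ?_⟩
  · calc γ.θ S - π / 2 ≤ π / 2 * γ.c S := h.θ_sub_le h.right_mem
      _ ≤ π / 2 * ((k + 1) * m * S * exp (S ^ 2 / 2)) := by
        gcongr
        exact h.c_le_of_r_le hx₀ h.right_mem (h.r_le h.right_mem)
      _ < 2 * ((k + 1) * m * S * exp (S ^ 2 / 2)) := by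
        gcongr
        linarith [pi_lt_four]
      _ ≤ 2 * ((k + 1) * mB * S * exp (T ^ 2 / 2)) := by gcongr
      _ = 2 * ((k + 1) * mB * exp (T ^ 2 / 2)) * S := by ring
  · refine lt_of_lt_of_le ?_ (h.min_div_two_le_r hx₀ ha hc)
    rw [div_mul_eq_mul_div, div_lt_iff₀ (by positivity)]
    rcases min_choice S a with hmin | hmin <;> rw [hmin] <;> nlinarith [mul_pos ha hSpos]

/-! ### Arcs up to the exit from the quadrant -/

section Exit

variable {γ : ProfileCurve} {B T : ℝ}

/- On an arc the a priori bounds are strict, so the two truncations, of the mean forcing at `B` and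
of `r / s` at `ε`, never take effect. -/
theorem isArc_of_bounds (hψc : Continuous ψ) (hε : 0 < ε) (hε1 : ε < 1) (hm : 0 < m) (hmB : m < B)
    (hγ : γ = ofForcing k lam ((k + 1) * m - lam) ε ψ)
    (hψ : ∀ s ∈ Icc 0 T, |weightedMean k (forcing k lam ((k + 1) * m - lam) ε ψ) s| ≤ B →
      ψ s = weightedMean k (forcing k lam ((k + 1) * m - lam) ε ψ) s)
    (hbounds : ∀ S, γ.IsArc k lam m S → 0 ≤ γ.x S → γ.θ S - π / 2 < B * S ∧ ε * S < γ.r S)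
    {t : ℝ} (ht : t ∈ Ioc 0 T) (hx : ∀ s ∈ Icc 0 t, 0 ≤ γ.x s) (hθ : ∀ s ∈ Icc 0 t, γ.θ s ≤ π) :
    γ.IsArc k lam m t := by
  subst hγ
  let Ψ := weightedMean k (forcing k lam ((k + 1) * m - lam) ε ψ)
  let ρ := weightedMean 0 fun t => cos (t * ψ t)
  let margin := fun s => min (B - |Ψ s|) (ρ s - ε)
  have hcont : Continuous margin :=
    (continuous_const.sub (continuous_weightedMean k (continuous_forcing hε hψc)).abs).min
      ((continuous_weightedMean 0 (by fun_prop)).sub continuous_const)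
  have harc : ∀ b ∈ Ioc 0 t, (∀ s ∈ Icc 0 b, 0 ≤ margin s) →
      (ofForcing k lam ((k + 1) * m - lam) ε ψ).IsArc k lam m b := fun b hb hmargin =>
    isArc_ofForcing hψc hε hε1.le hb.1 hm
      (fun s hs => hψ s ⟨hs.1, hs.2.trans (hb.2.trans ht.2)⟩
        (sub_nonneg.1 (le_min_iff.1 (hmargin s hs)).1))
      (fun s hs => sub_nonneg.1 (le_min_iff.1 (hmargin s hs)).2)
      fun s hs => hθ s ⟨hs.1, hs.2.trans hb.2⟩
  have hzero : 0 < margin 0 := by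
    have hΨ₀ : Ψ 0 = m := weightedMean_forcing_zero hε1.le
    have hρ₀ : ρ 0 = 1 := (weightedMean_zero _ _).trans (by simp)
    simp only [margin, hΨ₀, hρ₀, abs_of_pos hm, lt_min_iff, sub_pos]
    exact ⟨hmB, hε1⟩
  have hpos : ∀ s ∈ Icc 0 t, 0 < margin s := by
    refine pos_of_forall_pos_before hcont.continuousOn hzero fun b hb hpos => ?_
    have hb' := harc b hb (closure_Ico hb.1.ne ▸
      le_on_closure (fun s hs => (hpos s hs).le) continuousOn_const hcont.continuousOn)
    obtain ⟨hθb, hrb⟩ := hbounds b hb' (hx b ⟨hb.1.le, hb.2⟩)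
    have hθΨ : (ofForcing k lam ((k + 1) * m - lam) ε ψ).θ b = π / 2 + b * Ψ b := rfl
    have hΨ : 0 ≤ Ψ b :=
      nonneg_of_mul_nonneg_right (by linarith [hb'.pi_div_two_le_θ hb'.right_mem]) hb.1
    refine lt_min (sub_pos.2 ?_) (sub_pos.2 ?_)
    · rw [abs_of_nonneg hΨ]
      exact lt_of_mul_lt_mul_left (by linarith) hb.1.le
    · refine lt_of_mul_lt_mul_left ?_ hb.1.le
      rwa [mul_comm b ε, ← r_ofForcing]
  exact harc t (right_mem_Ioc.2 ht.1) fun s hs => (hpos s hs).le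

lemma exists_exit (hT : 0 < T) (hx : Continuous γ.x) (hθ : Continuous γ.θ) (hx₀ : 0 < γ.x 0)
    (hθ₀ : γ.θ 0 < π)
    (harc : ∀ t ∈ Ioc 0 T, (∀ s ∈ Icc 0 t, 0 ≤ γ.x s) → (∀ s ∈ Icc 0 t, γ.θ s ≤ π) →
      γ.IsArc k lam m t)
    (hbound : ∀ S, γ.IsArc k lam m S → 0 ≤ γ.x S → S < T) :
    ∃ t, γ.IsArc k lam m t ∧ 0 ≤ γ.x t ∧ (γ.x t = 0 ∨ γ.θ t = π) := by
  let f := fun s => min (γ.x s) (π - γ.θ s)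
  have hf : Continuous f := hx.min (continuous_const.sub hθ)
  have harc' : ∀ t ∈ Ioc 0 T, (∀ s ∈ Icc 0 t, 0 ≤ f s) → γ.IsArc k lam m t :=
    fun t ht h => harc t ht (fun s hs => (le_min_iff.1 (h s hs)).1)
      fun s hs => sub_nonneg.1 (le_min_iff.1 (h s hs)).2
  obtain ⟨b, hb, hfb⟩ : ∃ b ∈ Icc 0 T, f b ≤ 0 := by
    by_contra! hpos
    have hT' := right_mem_Icc.2 hT.le
    exact (hbound T (harc' T (right_mem_Ioc.2 hT) fun s hs => (hpos s hs).le)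
      (lt_min_iff.1 (hpos T hT')).1.le).false
  obtain ⟨t, ht, hft, hpos⟩ :=
    exists_first_zero hb.1 hf.continuousOn (lt_min hx₀ (sub_pos.2 hθ₀)) hfb
  have hnonneg : ∀ s ∈ Icc 0 t, 0 ≤ f s := closure_Ico ht.1.ne ▸
    le_on_closure (fun s hs => (hpos s hs).le) continuousOn_const hf.continuousOn
  refine ⟨t, harc' t ⟨ht.1, ht.2.trans hb.2⟩ hnonneg,
    (le_min_iff.1 (hnonneg t (right_mem_Icc.2 ht.1.le))).1, ?_⟩
  exact (min_choice (γ.x t) (π - γ.θ t)).imp (fun h => h.symm.trans hft)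
    fun h => (sub_eq_zero.1 (h.symm.trans hft)).symm

end Exit

theorem exists_arc_family (k : ℕ) {lam mA mB : ℝ} (hlam : lam ≤ 0) (hA : 0 < mA) (hAB : mA ≤ mB) :
    ∃ γ : Icc mA mB → ProfileCurve,
      (Continuous fun z : Icc mA mB × ℝ => (γ z.1).x z.2) ∧
      (Continuous fun z : Icc mA mB × ℝ => (γ z.1).θ z.2) ∧
      ∀ m, ∃ t, (γ m).IsArc k lam m t ∧ 0 ≤ (γ m).x t ∧ ((γ m).x t = 0 ∨ (γ m).θ t = π) := by
  obtain ⟨T, B, ε, hT, hB, hε, hε1, hbounds⟩ := exists_bounds k hlam hA hAB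
  have ha : Continuous fun m : Icc mA mB => (k + 1) * (m : ℝ) - lam := by fun_prop
  obtain ⟨φ, hφ, hsol⟩ := exists_truncated_solution (k := k) (lam := lam) ha hε hε1.le hT
    ((hA.trans_le hAB).trans hB).le
  let γ := fun m : Icc mA mB => ofForcing k lam ((k + 1) * m - lam) ε (φ m)
  have hx : Continuous fun z : Icc mA mB × ℝ => (γ z.1).x z.2 :=
    continuous_x_ofAngle (ε := ε) ha hφ
  have hθ : Continuous fun z : Icc mA mB × ℝ => (γ z.1).θ z.2 :=
    continuous_const.add (continuous_snd.mul
      (continuous_weightedMean_uncurry k (continuous_forcing_uncurry hε ha hφ)))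
  refine ⟨γ, hx, hθ, fun m => ?_⟩
  have hm : 0 < (m : ℝ) := hA.trans_le m.2.1
  refine exists_exit hT (hx.comp (Continuous.prodMk_right m)) (hθ.comp (Continuous.prodMk_right m))
    ?_ ?_ (fun t => isArc_of_bounds (hφ.comp (Continuous.prodMk_right m)) hε hε1 hm
      (m.2.2.trans_lt hB) rfl (hsol m) fun S h hxS => (hbounds m m.2 (γ m) S h hxS).2)
    fun S h hxS => (hbounds m m.2 (γ m) S h hxS).1
  · have : (γ m).x 0 = (k + 1) * m - lam := by simp [γ, ofForcing, ofAngle]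
    rw [this]
    linarith [mul_pos k.cast_add_one_pos hm]
  · have : (γ m).θ 0 = π / 2 := by simp [γ, ofForcing]
    linarith [pi_pos]

end ProfileCurve

/-! ### Shooting -/

/-- On the half-line `[0, ∞)` the function `f` becomes negative while `g` is still positive. In the
shooting argument `f` and `g` are `x` and `π - θ`, in either order. -/
def CrossesFirst (f g : ℝ → ℝ) : Prop := ∃ s ≥ 0, f s < 0 ∧ ∀ u ∈ Icc 0 s, 0 < g u

namespace CrossesFirst

lemma not_swap {f g : ℝ → ℝ} (h : CrossesFirst f g) : ¬CrossesFirst g f := by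
  rintro ⟨t, ht, hgt, hf⟩
  obtain ⟨s, hs, hfs, hg⟩ := h
  rcases le_total s t with hst | hts
  · exact (hf s ⟨hs, hst⟩).not_gt hfs
  · exact (hg t ⟨ht, hts⟩).not_gt hgt

lemma of_hasDerivAt_neg {f g : ℝ → ℝ} {f' t : ℝ} (ht : 0 ≤ t) (hft : f t = 0)
    (hf : HasDerivAt f f' t) (hf' : f' < 0) (hg : ContinuousAt g t)
    (hpos : ∀ u ∈ Icc 0 t, 0 < g u) : CrossesFirst f g := by
  have hslope : ∀ᶠ s in 𝓝[>] t, slope f t s < 0 :=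
    (hasDerivAt_iff_tendsto_slope.1 hf).eventually_lt_const hf' |>.filter_mono
      (nhdsWithin_mono t fun s hs => ne_of_gt hs)
  obtain ⟨b, hb, hgb⟩ := exists_Ico_subset_of_mem_nhds
    (hg.eventually_const_lt (hpos t (right_mem_Icc.2 ht))) (exists_gt t)
  obtain ⟨s, hs, hts, hsb⟩ := (hslope.and (Ioo_mem_nhdsGT hb)).exists
  refine ⟨s, ht.trans hts.le, ?_, fun u hu => ?_⟩
  · rw [slope_def_field, hft, sub_zero] at hs
    exact neg_of_div_neg_left hs (sub_nonneg.2 hts.le)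
  · rcases le_total u t with hut | htu
    · exact hpos u ⟨hu.1, hut⟩
    · exact hgb ⟨htu, hu.2.trans_lt hsb⟩

variable {P : Type*} [TopologicalSpace P] {f g : P → ℝ → ℝ}

lemma isOpen_setOf (hf : Continuous ↿f) (hg : Continuous ↿g) :
    IsOpen {p | CrossesFirst (f p) (g p)} := by
  refine isOpen_iff_mem_nhds.2 fun p ⟨s, hs, hfs, hpos⟩ => ?_
  have hf' : ∀ᶠ q in 𝓝 p, f q s < 0 :=
    (hf.comp (Continuous.prodMk_left s)).continuousAt.eventually_lt_const hfs
  have hg' : ∀ᶠ q in 𝓝 p, ∀ u ∈ Icc 0 s, 0 < g q u :=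
    isCompact_Icc.eventually_forall_of_forall_eventually fun u hu =>
      hg.continuousAt.eventually_const_lt (hpos u hu)
  filter_upwards [hf', hg'] with q hfq hgq
  exact ⟨s, hs, hfq, hgq⟩

theorem exists_not [PreconnectedSpace P] (hf : Continuous ↿f) (hg : Continuous ↿g)
    (hfg : ∃ p, CrossesFirst (f p) (g p)) (hgf : ∃ p, CrossesFirst (g p) (f p)) :
    ∃ p, ¬CrossesFirst (f p) (g p) ∧ ¬CrossesFirst (g p) (f p) := by
  by_contra! hcover
  obtain ⟨p, h, h'⟩ := nonempty_inter (isOpen_setOf hf hg) (isOpen_setOf hg hf)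
    (eq_univ_of_forall fun p => or_iff_not_imp_left.2 (hcover p)) hfg hgf
  exact h.not_swap h'

end CrossesFirst

namespace ProfileCurve

variable {γ : ProfileCurve} {k : ℕ} {lam m S : ℝ}

lemma IsArc.crossesFirst_x (h : γ.IsArc k lam m S) (hx : γ.x S = 0) (hθ : γ.θ S < π) :
    CrossesFirst γ.x fun s => π - γ.θ s :=
  .of_hasDerivAt_neg h.length_pos.le hx (h.hasDerivAt_x S h.right_mem)
    (neg_neg_of_pos (h.c_pos (right_mem_Ioc.2 h.length_pos)))
    (continuousAt_const.sub (h.hasDerivAt_θ S h.right_mem).continuousAt)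
    fun _ hu => sub_pos.2 ((h.strictMonoOn_θ.monotoneOn hu h.right_mem hu.2).trans_lt hθ)

lemma IsArc.crossesFirst_θ (h : γ.IsArc k lam m S) (hx : 0 < γ.x S) (hθ : γ.θ S = π) :
    CrossesFirst (fun s => π - γ.θ s) γ.x :=
  .of_hasDerivAt_neg h.length_pos.le (sub_eq_zero.2 hθ.symm)
    ((h.hasDerivAt_θ S h.right_mem).const_sub π) (neg_neg_of_pos (h.κ_pos h.right_mem))
    (h.hasDerivAt_x S h.right_mem).continuousAt fun _ hu => hx.trans_le (h.x_ge hu)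

lemma IsArc.θ_lt_pi_of_barrier (h : γ.IsArc k lam m S) (hx : 0 ≤ γ.x S)
    (hsphere : m * ((k + 1) * m - lam) < 1) (hm : 1 / m + lam - k * m < (k + 3) * m ^ 3) :
    γ.θ S < π := by
  refine (h.θ_le S h.right_mem).lt_of_ne fun hθ => ?_
  have hq := h.q_pos hx hsphere hm h.right_mem
  rw [q, σ, hθ, sin_pi] at hq
  linarith [mul_nonneg hx (h.μ_pos h.right_mem).le]

theorem exists_closing_arc (k : ℕ) {lam : ℝ} (hlam₁ : -2 / √((k + 1 : ℝ) + 2) < lam)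
    (hlam₂ : lam < 0) : ∃ (γ : ProfileCurve) (m S : ℝ), γ.IsArc k lam m S ∧ γ.x S = 0 ∧ γ.θ S = π ∧
      m * ((k + 1) * m - lam) < 1 := by
  have hn : (0 : ℝ) < k + 1 := k.cast_add_one_pos
  have hR : 0 < (sphereRadius (k + 1) lam)⁻¹ := inv_pos.2 (sphereRadius_pos hn)
  obtain ⟨mB, hbarrier, hmB, hmBR⟩ :=
    ((eventually_barrier_condition hn hlam₁).and (Ioo_mem_nhdsLT hR)).exists
  obtain ⟨mA, hsmall, hmA, hAB⟩ :=
    ((eventually_x_pos (k := k) hlam₂).and (Ioo_mem_nhdsGT hmB)).exists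
  have hsphere : ∀ m, 0 < m → m ≤ mB → m * ((k + 1) * m - lam) < 1 := fun m hm hmB =>
    mul_lt_one_of_lt_inv_sphereRadius hn hm (hmB.trans_lt hmBR)
  obtain ⟨γ, hx, hθ, hexit⟩ := exists_arc_family k hlam₂.le hmA hAB.le
  have hB : CrossesFirst (γ ⟨mB, hAB.le, le_rfl⟩).x
      fun s => π - (γ ⟨mB, hAB.le, le_rfl⟩).θ s := by
    obtain ⟨t, h, hxt, hexit⟩ := hexit ⟨mB, hAB.le, le_rfl⟩
    have hθt := h.θ_lt_pi_of_barrier hxt (hsphere mB hmB le_rfl)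
      (by convert hbarrier using 1 <;> ring)
    exact h.crossesFirst_x (hexit.resolve_right hθt.ne) hθt
  have hA : CrossesFirst (fun s => π - (γ ⟨mA, le_rfl, hAB.le⟩).θ s)
      (γ ⟨mA, le_rfl, hAB.le⟩).x := by
    obtain ⟨t, h, hxt, hexit⟩ := hexit ⟨mA, le_rfl, hAB.le⟩
    have hxt' := hsmall _ t h hxt
    exact h.crossesFirst_θ hxt' (hexit.resolve_left hxt'.ne')
  have : PreconnectedSpace (Icc mA mB) := Subtype.preconnectedSpace isPreconnected_Icc
  obtain ⟨m, hmx, hmθ⟩ := CrossesFirst.exists_not (f := fun m => (γ m).x)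
    (g := fun m s => π - (γ m).θ s) hx (continuous_const.sub hθ) ⟨_, hB⟩ ⟨_, hA⟩
  obtain ⟨t, h, hxt, hexit⟩ := hexit m
  refine ⟨γ m, m, t, h, ?_, ?_, hsphere m (hmA.trans_le m.2.1) m.2.2⟩
  · by_contra hxt'
    exact hmθ (h.crossesFirst_θ (hxt.lt_of_ne' hxt') (hexit.resolve_left hxt'))
  · by_contra hθt
    exact hmx (h.crossesFirst_x (hexit.resolve_right hθt) ((h.θ_le t h.right_mem).lt_of_ne hθt))

lemma IsArc.deriv_θ {s : ℝ} (h : γ.IsArc k lam m S) (hs : s ∈ Ioc 0 S) : deriv γ.θ s =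
      (((k + 1 : ℝ) - 1) / γ.r s - γ.r s) * cos (γ.θ s) + γ.x s * sin (γ.θ s) + lam := by
  have hsI := Ioc_subset_Icc_self hs
  have hμ : γ.μ s = γ.c s / γ.r s := by
    rw [h.c_eq s hsI, mul_div_cancel_left₀ _ (h.r_pos s hs).ne']
  rw [(h.hasDerivAt_θ s hsI).deriv, κ, hμ, c, σ]
  ring

end ProfileCurve

theorem compact_convex_lambda_hypersurface_profile_general
    (n : ℕ) (hn : 1 ≤ n) (lam : ℝ)
    (hlam₁ : -2 / Real.sqrt ((n : ℝ) + 2) < lam) (hlam₂ : lam < 0) :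
    ∃ (xhat shat : ℝ) (x r θ : ℝ → ℝ),
      -lam < xhat ∧ xhat < (-lam + Real.sqrt (lam ^ 2 + 4 * n)) / 2 ∧
      0 < shat ∧
      ContDiffOn ℝ 1 x (Icc 0 shat) ∧ ContDiffOn ℝ 1 r (Icc 0 shat) ∧
      ContDiffOn ℝ 1 θ (Icc 0 shat) ∧
      (∀ s ∈ Icc (0 : ℝ) shat, deriv x s = Real.cos (θ s) ∧ deriv r s = Real.sin (θ s)) ∧
      (∀ s ∈ Ioc (0 : ℝ) shat,
        deriv θ s = (((n : ℝ) - 1) / r s - r s) * Real.cos (θ s) + x s * Real.sin (θ s) + lam) ∧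
      x 0 = xhat ∧ r 0 = 0 ∧ θ 0 = Real.pi / 2 ∧
      x shat = 0 ∧ θ shat = Real.pi ∧
      (∀ s ∈ Ioc (0 : ℝ) shat, 0 < r s) ∧
      (∀ s ∈ Ico (0 : ℝ) shat, 0 < x s) ∧
      StrictMonoOn θ (Icc 0 shat) ∧
      (∀ s ∈ Icc (0 : ℝ) shat, Real.pi / 2 ≤ θ s ∧ θ s ≤ Real.pi) ∧
      (∀ s ∈ Ioc (0 : ℝ) shat, Real.cos (θ s) < 0) := by
  obtain ⟨k, rfl⟩ := Nat.exists_eq_add_of_le' hn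
  rw [Nat.cast_add_one] at hlam₁ ⊢
  obtain ⟨γ, m, S, h, hxS, hθS, hsphere⟩ := ProfileCurve.exists_closing_arc k hlam₁ hlam₂
  have hm : 0 < (k + 1) * m := mul_pos k.cast_add_one_pos h.curvature_pos
  have hlow : -lam < (k + 1) * m - lam := by linarith
  have hhigh : (k + 1) * m - lam < sphereRadius (k + 1) lam := lt_sphereRadius (by nlinarith)
  have hx : ContDiffOn ℝ 1 γ.x (Icc 0 S) :=
    contDiffOn_one_Icc_of_hasDerivAt h.length_pos h.hasDerivAt_x h.continuousOn_c.neg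
  have hr : ContDiffOn ℝ 1 γ.r (Icc 0 S) :=
    contDiffOn_one_Icc_of_hasDerivAt h.length_pos h.hasDerivAt_r h.continuousOn_σ
  have hθ : ContDiffOn ℝ 1 γ.θ (Icc 0 S) :=
    contDiffOn_one_Icc_of_hasDerivAt h.length_pos h.hasDerivAt_θ h.continuousOn_κ
  have hxpos : ∀ s ∈ Ico 0 S, 0 < γ.x s := fun s hs =>
    hxS.symm.trans_lt (h.strictAntiOn_x ⟨hs.1, hs.2.le⟩ h.right_mem hs.2)
  exact ⟨(k + 1) * m - lam, S, γ.x, γ.r, γ.θ, hlow, hhigh, h.length_pos, hx, hr, hθ,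
    fun s hs => ⟨(h.hasDerivAt_x s hs).deriv.trans (neg_neg _), (h.hasDerivAt_r s hs).deriv⟩,
    fun s hs => h.deriv_θ hs, h.x_zero, h.r_zero, h.θ_zero, hxS, hθS, h.r_pos, hxpos,
    h.strictMonoOn_θ, fun s hs => ⟨h.pi_div_two_le_θ hs, h.θ_le s hs⟩,
    fun s hs => neg_pos.1 (h.c_pos hs)⟩

/-- Theorem 1.1 (ODE reduction): for `n ≥ 2` and `-2/√(n+2) < λ < 0` there is a profile
curve `(x(s), r(s))` with tangent angle `θ(s)` solving the rotational `λ`-hypersurface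
system, starting perpendicularly on the `x`-axis at `x̂ ∈ (-λ, (-λ+√(λ²+4n))/2)` and
ending on the `r`-axis with `θ = π`, with `θ` strictly increasing (convexity). -/
theorem compact_convex_lambda_hypersurface_profile
    (n : ℕ) (hn : 2 ≤ n) (lam : ℝ)
    (hlam₁ : -2 / Real.sqrt ((n : ℝ) + 2) < lam) (hlam₂ : lam < 0) :
    ∃ (xhat shat : ℝ) (x r θ : ℝ → ℝ),
      -lam < xhat ∧ xhat < (-lam + Real.sqrt (lam ^ 2 + 4 * n)) / 2 ∧
      0 < shat ∧
      ContDiffOn ℝ 1 x (Icc 0 shat) ∧ ContDiffOn ℝ 1 r (Icc 0 shat) ∧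
      ContDiffOn ℝ 1 θ (Icc 0 shat) ∧
      (∀ s ∈ Icc (0 : ℝ) shat, deriv x s = Real.cos (θ s) ∧ deriv r s = Real.sin (θ s)) ∧
      (∀ s ∈ Ioc (0 : ℝ) shat,
        deriv θ s = (((n : ℝ) - 1) / r s - r s) * Real.cos (θ s) + x s * Real.sin (θ s) + lam) ∧
      x 0 = xhat ∧ r 0 = 0 ∧ θ 0 = Real.pi / 2 ∧
      x shat = 0 ∧ θ shat = Real.pi ∧
      (∀ s ∈ Ioc (0 : ℝ) shat, 0 < r s) ∧
      (∀ s ∈ Ico (0 : ℝ) shat, 0 < x s) ∧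
      StrictMonoOn θ (Icc 0 shat) ∧
      (∀ s ∈ Icc (0 : ℝ) shat, Real.pi / 2 ≤ θ s ∧ θ s ≤ Real.pi) ∧
      (∀ s ∈ Ioc (0 : ℝ) shat, Real.cos (θ s) < 0) :=
  compact_convex_lambda_hypersurface_profile_general n (one_le_two.trans hn) lam hlam₁ hlam₂
end

section
/- Let n ≥ 2 be an integer and let v : [0, ∞) → ℝ be a C² function satisfying 4ξ·v''(ξ) = 2(ξ − n)·v'(ξ) − v(ξ) for all ξ ≥ 0, with v(0) = 1 (so that necessarily v'(0) = −1/(2n)). Then v(n) > 0 and v(2n) < 0. -/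
open Real Set

/-!
Differentiating `α ξ v'' = β (ξ - ν) v' - v` gives a Sturm-Liouville equation
`(p v'')' = s v'` for `v'`, with positive `p` and `s` as soon as `β > 1`, and with `p v''` vanishing
at the singular endpoint `0`. The product of `v'` and its flux `p v''` is nondecreasing and starts
at `0`, so `v'²` is nondecreasing: `v'` never vanishes and keeps the sign of `v' 0 < 0`. Hence the
flux is negative, that is, `v'' < 0` on `(0, ∞)`. At the turning point the equation reads
`v ν = -α ν v'' ν > 0`, and by strict concavity `v` lies below its tangent at `0`, which
vanishes at `β ν`.
-/

section HalfLine

variable {c x : ℝ} {f f' : ℝ → ℝ}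

theorem monotoneOn_Ici_of_hasDerivAt_nonneg (hf : ContinuousOn f (Ici c))
    (hf' : ∀ x, c < x → HasDerivAt f (f' x) x) (hnonneg : ∀ x, c < x → 0 ≤ f' x) :
    MonotoneOn f (Ici c) :=
  monotoneOn_of_hasDerivWithinAt_nonneg (convex_Ici c) hf
    (fun x hx ↦ (hf' x (by simpa using hx)).hasDerivWithinAt)
    (fun x hx ↦ hnonneg x (by simpa using hx))

theorem strictAntiOn_Ici_of_hasDerivAt_neg (hf : ContinuousOn f (Ici c))
    (hf' : ∀ x, c < x → HasDerivAt f (f' x) x) (hneg : ∀ x, c < x → f' x < 0) :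
    StrictAntiOn f (Ici c) :=
  strictAntiOn_of_hasDerivWithinAt_neg (convex_Ici c) hf
    (fun x hx ↦ (hf' x (by simpa using hx)).hasDerivWithinAt)
    (fun x hx ↦ hneg x (by simpa using hx))

theorem lt_tangent_of_strictAntiOn_deriv (hf : ContinuousOn f (Ici c))
    (hf' : ∀ x, c < x → HasDerivAt f (f' x) x) (hanti : StrictAntiOn f' (Ici c)) (hx : c < x) :
    f x < f c + f' c * (x - c) := by
  obtain ⟨z, ⟨hcz, -⟩, hz⟩ := exists_hasDerivAt_eq_slope f f' hx (hf.mono Icc_subset_Ici_self)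
    fun y hy ↦ hf' y hy.1
  have hslope : (f x - f c) / (x - c) < f' c := hz ▸ hanti self_mem_Ici hcz.le hcz
  linarith [(div_lt_iff₀ (sub_pos.2 hx)).1 hslope]

theorem hasDerivAt_derivWithin_Ici (hf : DifferentiableOn ℝ f (Ici c)) (hx : c < x) :
    HasDerivAt f (derivWithin f (Ici c) x) x :=
  (hf x hx.le).hasDerivWithinAt.hasDerivAt (Ici_mem_nhds hx)

theorem derivWithin_derivWithin_Ici (f : ℝ → ℝ) (hx : c < x) :
    derivWithin (derivWithin f (Ici c)) (Ici c) x = deriv (deriv f) x := by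
  rw [derivWithin_of_mem_nhds (Ici_mem_nhds hx)]
  apply Filter.EventuallyEq.deriv_eq
  filter_upwards [Ioi_mem_nhds hx] with y hy using derivWithin_of_mem_nhds (Ici_mem_nhds hy)

end HalfLine

/-- `(w, q)` is a solution on `(c, ∞)` of the linear cooperative system `w' = g q`, `q' = s w` with
positive coefficients, continuous up to `c`. This is the first-order form of the Sturm-Liouville
equation `(p w')' = s w`, with `g = 1 / p` and flux `q = p w'`; the coefficients may be singular
at `c`. -/
structure IsCooperativeSolution (c : ℝ) (g s w q : ℝ → ℝ) : Prop where
  continuousOn_fst : ContinuousOn w (Ici c)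
  continuousOn_snd : ContinuousOn q (Ici c)
  hasDerivAt_fst : ∀ x, c < x → HasDerivAt w (g x * q x) x
  hasDerivAt_snd : ∀ x, c < x → HasDerivAt q (s x * w x) x
  coeff_fst_pos : ∀ x, c < x → 0 < g x
  coeff_snd_pos : ∀ x, c < x → 0 < s x

namespace IsCooperativeSolution

variable {c x : ℝ} {g s w q : ℝ → ℝ}

theorem monotoneOn_mul (h : IsCooperativeSolution c g s w q) :
    MonotoneOn (fun x ↦ w x * q x) (Ici c) := by
  refine monotoneOn_Ici_of_hasDerivAt_nonneg (h.continuousOn_fst.mul h.continuousOn_snd)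
    (fun x hx ↦ (h.hasDerivAt_fst x hx).mul (h.hasDerivAt_snd x hx)) fun x hx ↦ ?_
  have hg := h.coeff_fst_pos x hx
  have hs := h.coeff_snd_pos x hx
  calc 0 ≤ g x * q x ^ 2 + s x * w x ^ 2 := by positivity
    _ = g x * q x * q x + w x * (s x * w x) := by ring

theorem monotoneOn_sq (h : IsCooperativeSolution c g s w q) (hc : 0 ≤ w c * q c) :
    MonotoneOn (fun x ↦ w x ^ 2) (Ici c) := by
  refine monotoneOn_Ici_of_hasDerivAt_nonneg (h.continuousOn_fst.pow 2)
    (fun x hx ↦ (h.hasDerivAt_fst x hx).pow 2) fun x hx ↦ ?_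
  have hwq : 0 ≤ w x * q x := hc.trans (h.monotoneOn_mul self_mem_Ici hx.le hx.le)
  have hg := h.coeff_fst_pos x hx
  calc 0 ≤ 2 * g x * (w x * q x) := by positivity
    _ = (2 : ℕ) * w x ^ (2 - 1) * (g x * q x) := by norm_num; ring

theorem fst_neg (h : IsCooperativeSolution c g s w q) (hw : w c < 0) (hq : q c ≤ 0) (hx : c ≤ x) :
    w x < 0 := by
  by_contra! hwx
  obtain ⟨z, hz, hwz⟩ : ∃ z ∈ Icc c x, w z = 0 :=
    intermediate_value_Icc hx (h.continuousOn_fst.mono Icc_subset_Ici_self) ⟨hw.le, hwx⟩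
  have hsq : w c ^ 2 ≤ w z ^ 2 :=
    h.monotoneOn_sq (mul_nonneg_of_nonpos_of_nonpos hw.le hq) self_mem_Ici hz.1 hz.1
  have hwc : 0 < w c ^ 2 := sq_pos_of_neg hw
  simp only [hwz] at hsq
  linarith

theorem snd_neg (h : IsCooperativeSolution c g s w q) (hw : w c < 0) (hq : q c ≤ 0) (hx : c < x) :
    q x < 0 := by
  have hanti : StrictAntiOn q (Ici c) :=
    strictAntiOn_Ici_of_hasDerivAt_neg h.continuousOn_snd h.hasDerivAt_snd fun y hy ↦
      mul_neg_of_pos_of_neg (h.coeff_snd_pos y hy) (h.fst_neg hw hq hy.le)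
  exact (hanti self_mem_Ici hx.le hx).trans_le hq

end IsCooperativeSolution

/-- The weight `ξ ^ k * exp (-(r * ξ))`, an unnormalised Gamma density; it is the integrating factor
that puts the differentiated Kummer-type equation into Sturm-Liouville form. -/
noncomputable def gammaWeight (k r ξ : ℝ) : ℝ :=
  ξ ^ k * exp (-(r * ξ))

section GammaWeight

variable {k ξ : ℝ}

theorem gammaWeight_pos (k r : ℝ) (hξ : 0 < ξ) : 0 < gammaWeight k r ξ :=
  mul_pos (rpow_pos_of_pos hξ k) (exp_pos _)

theorem gammaWeight_zero (hk : k ≠ 0) (r : ℝ) : gammaWeight k r 0 = 0 := by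
  simp [gammaWeight, hk]

theorem continuous_gammaWeight (hk : 0 ≤ k) (r : ℝ) : Continuous (gammaWeight k r) :=
  (continuous_rpow_const hk).mul (by fun_prop)

theorem hasDerivAt_gammaWeight (k r : ℝ) (hξ : 0 < ξ) :
    HasDerivAt (gammaWeight k r) ((k / ξ - r) * gammaWeight k r ξ) ξ := by
  have hpow : HasDerivAt (fun x : ℝ ↦ x ^ k) (k * ξ ^ (k - 1)) ξ :=
    hasDerivAt_rpow_const (Or.inl hξ.ne')
  have hexp : HasDerivAt (fun x ↦ exp (-(r * x))) (exp (-(r * ξ)) * -(r * 1)) ξ :=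
    ((hasDerivAt_id ξ).const_mul r).neg.exp
  refine (hpow.mul hexp).congr_deriv ?_
  rw [gammaWeight, rpow_sub_one hξ.ne']
  ring

end GammaWeight

/-- `v` solves `α ξ v'' = β (ξ - ν) v' - v` on `[0, ∞)`, where `v'` and `v''` are its first two
derivatives on `(0, ∞)`. Only `v` and `v'` have to be continuous up to `0`; the value of `v''` there
is immaterial, and the equation at `0` is the boundary condition `β ν v' 0 = -v 0`. -/
structure IsKummerSolution (α β ν : ℝ) (v v' v'' : ℝ → ℝ) : Prop where
  continuousOn : ContinuousOn v (Ici 0)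
  continuousOn_deriv : ContinuousOn v' (Ici 0)
  hasDerivAt : ∀ ξ, 0 < ξ → HasDerivAt v (v' ξ) ξ
  hasDerivAt_deriv : ∀ ξ, 0 < ξ → HasDerivAt v' (v'' ξ) ξ
  equation : ∀ ξ, 0 ≤ ξ → α * ξ * v'' ξ = β * (ξ - ν) * v' ξ - v ξ

namespace IsKummerSolution

variable {α β ν ξ : ℝ} {v v' v'' : ℝ → ℝ}

theorem of_contDiffOn (hv : ContDiffOn ℝ 2 v (Ici 0))
    (hode : ∀ ξ, 0 < ξ → α * ξ * deriv (deriv v) ξ = β * (ξ - ν) * deriv v ξ - v ξ) :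
    IsKummerSolution α β ν v (derivWithin v (Ici 0))
      (derivWithin (derivWithin v (Ici 0)) (Ici 0)) := by
  have hv' : ContDiffOn ℝ 1 (derivWithin v (Ici 0)) (Ici 0) :=
    hv.derivWithin (uniqueDiffOn_Ici 0) (by norm_num)
  have hv'' : ContinuousOn (derivWithin (derivWithin v (Ici 0)) (Ici 0)) (Ici 0) :=
    hv'.continuousOn_derivWithin (uniqueDiffOn_Ici 0) le_rfl
  refine ⟨hv.continuousOn, hv'.continuousOn,
    fun ξ ↦ hasDerivAt_derivWithin_Ici (hv.differentiableOn two_ne_zero),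
    fun ξ ↦ hasDerivAt_derivWithin_Ici (hv'.differentiableOn one_ne_zero), ?_⟩
  -- Both sides are continuous on `[0, ∞)`, so the equation extends from `(0, ∞)` to `0`.
  refine EqOn.of_subset_closure (s := Ioi 0) (t := Ici 0) (fun ξ hξ ↦ ?_)
    (ContinuousOn.mul (by fun_prop) hv'')
    ((ContinuousOn.mul (by fun_prop) hv'.continuousOn).sub hv.continuousOn)
    Ioi_subset_Ici_self (closure_Ioi 0).ge
  rw [derivWithin_derivWithin_Ici v hξ, derivWithin_of_mem_nhds (Ici_mem_nhds hξ)]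
  exact hode ξ hξ

theorem deriv_zero (h : IsKummerSolution α β ν v v' v'') (hβν : β * ν ≠ 0) :
    v' 0 = -v 0 / (β * ν) := by
  rw [eq_div_iff hβν]
  linarith [h.equation 0 le_rfl]

theorem deriv_zero_neg (h : IsKummerSolution α β ν v v' v'') (hβν : 0 < β * ν) (hv0 : 0 < v 0) :
    v' 0 < 0 := by
  rw [h.deriv_zero hβν.ne']
  exact div_neg_of_neg_of_pos (neg_neg_of_pos hv0) hβν

/-- The flux `p v''` of the Sturm-Liouville equation satisfied by `v'`, where `p` is `α ξ` times
the weight. The factor `α ξ v''` is expressed through the equation, which makes the flux continuous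
at `0`. -/
noncomputable def flux (α β ν : ℝ) (v v' : ℝ → ℝ) (ξ : ℝ) : ℝ :=
  gammaWeight (β * ν / α) (β / α) ξ * (β * (ξ - ν) * v' ξ - v ξ)

theorem continuousOn_flux (h : IsKummerSolution α β ν v v' v'') (hk : 0 ≤ β * ν / α) :
    ContinuousOn (flux α β ν v v') (Ici 0) :=
  (continuous_gammaWeight hk _).continuousOn.mul
    ((ContinuousOn.mul (by fun_prop) h.continuousOn_deriv).sub h.continuousOn)

theorem flux_eq (h : IsKummerSolution α β ν v v' v'') (hξ : 0 < ξ) :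
    flux α β ν v v' ξ = α * ξ * gammaWeight (β * ν / α) (β / α) ξ * v'' ξ := by
  rw [flux, ← h.equation ξ hξ.le]
  ring

theorem hasDerivAt_flux (h : IsKummerSolution α β ν v v' v'') (hα : α ≠ 0) (hξ : 0 < ξ) :
    HasDerivAt (flux α β ν v v') ((β - 1) * gammaWeight (β * ν / α) (β / α) ξ * v' ξ) ξ := by
  have hlin : HasDerivAt (fun x ↦ β * (x - ν)) (β * 1) ξ :=
    ((hasDerivAt_id ξ).sub_const ν).const_mul β
  refine ((hasDerivAt_gammaWeight _ _ hξ).mul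
    ((hlin.mul (h.hasDerivAt_deriv ξ hξ)).sub (h.hasDerivAt ξ hξ))).congr_deriv ?_
  simp only [Pi.sub_apply, Pi.mul_apply]
  rw [← h.equation ξ hξ.le]
  field_simp
  ring

theorem isCooperativeSolution (h : IsKummerSolution α β ν v v' v'') (hα : 0 < α) (hβ : 1 < β)
    (hν : 0 < ν) :
    IsCooperativeSolution 0 (fun ξ ↦ (α * ξ * gammaWeight (β * ν / α) (β / α) ξ)⁻¹)
      (fun ξ ↦ (β - 1) * gammaWeight (β * ν / α) (β / α) ξ) v' (flux α β ν v v') where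
  continuousOn_fst := h.continuousOn_deriv
  continuousOn_snd := h.continuousOn_flux (by positivity)
  hasDerivAt_fst ξ hξ := by
    have hp := gammaWeight_pos (β * ν / α) (β / α) hξ
    refine (h.hasDerivAt_deriv ξ hξ).congr_deriv ?_
    rw [h.flux_eq hξ, inv_mul_cancel_left₀ (by positivity)]
  hasDerivAt_snd ξ := h.hasDerivAt_flux hα.ne'
  coeff_fst_pos ξ hξ := inv_pos.2 (mul_pos (mul_pos hα hξ) (gammaWeight_pos _ _ hξ))
  coeff_snd_pos ξ hξ := mul_pos (sub_pos.2 hβ) (gammaWeight_pos _ _ hξ)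

theorem deriv_deriv_neg (h : IsKummerSolution α β ν v v' v'') (hα : 0 < α) (hβ : 1 < β)
    (hν : 0 < ν) (hv0 : 0 < v 0) (hξ : 0 < ξ) : v'' ξ < 0 := by
  have hflux_zero : flux α β ν v v' 0 = 0 := by
    rw [flux, gammaWeight_zero (by positivity), zero_mul]
  have hflux_neg : flux α β ν v v' ξ < 0 :=
    (h.isCooperativeSolution hα hβ hν).snd_neg (h.deriv_zero_neg (by positivity) hv0)
      hflux_zero.le hξ
  rw [h.flux_eq hξ] at hflux_neg
  have hp := gammaWeight_pos (β * ν / α) (β / α) hξ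
  exact neg_of_mul_neg_right hflux_neg (by positivity)

theorem pos_turningPoint (h : IsKummerSolution α β ν v v' v'') (hα : 0 < α) (hβ : 1 < β)
    (hν : 0 < ν) (hv0 : 0 < v 0) : 0 < v ν := by
  have hv'' : α * ν * v'' ν < 0 :=
    mul_neg_of_pos_of_neg (mul_pos hα hν) (h.deriv_deriv_neg hα hβ hν hv0 hν)
  linarith [h.equation ν hν.le]

theorem neg_tangentZero (h : IsKummerSolution α β ν v v' v'') (hα : 0 < α) (hβ : 1 < β)
    (hν : 0 < ν) (hv0 : 0 < v 0) : v (β * ν) < 0 := by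
  have hβν : 0 < β * ν := by positivity
  have hanti : StrictAntiOn v' (Ici 0) :=
    strictAntiOn_Ici_of_hasDerivAt_neg h.continuousOn_deriv h.hasDerivAt_deriv fun ξ hξ ↦
      h.deriv_deriv_neg hα hβ hν hv0 hξ
  calc v (β * ν) < v 0 + v' 0 * (β * ν - 0) :=
        lt_tangent_of_strictAntiOn_deriv h.continuousOn h.hasDerivAt hanti hβν
    _ = 0 := by rw [h.deriv_zero hβν.ne', sub_zero, div_mul_cancel₀ _ hβν.ne', add_neg_cancel]

end IsKummerSolution

theorem kummer_sign_change_general {α β ν : ℝ} (hα : 0 < α) (hβ : 1 < β) (hν : 0 < ν) {v : ℝ → ℝ}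
    (hv : ContDiffOn ℝ 2 v (Ici 0))
    (hode : ∀ ξ, 0 < ξ → α * ξ * deriv (deriv v) ξ = β * (ξ - ν) * deriv v ξ - v ξ)
    (hv0 : 0 < v 0) :
    0 < v ν ∧ v (β * ν) < 0 :=
  have h := IsKummerSolution.of_contDiffOn hv hode
  ⟨h.pos_turningPoint hα hβ hν hv0, h.neg_tangentZero hα hβ hν hv0⟩

/-- A solution of the Kummer-type equation `4ξ v'' = 2(ξ - n) v' - v` on `[0, ∞)` with
`v(0) = 1` satisfies `v(n) > 0` and `v(2n) < 0`. -/
theorem kummer_sign_change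
    (n : ℕ) (hn : 2 ≤ n) (v : ℝ → ℝ)
    (hv : ContDiffOn ℝ 2 v (Ici 0))
    (hode : ∀ ξ : ℝ, 0 ≤ ξ →
      4 * ξ * deriv (deriv v) ξ = 2 * (ξ - (n : ℝ)) * deriv v ξ - v ξ)
    (hv0 : v 0 = 1) :
    0 < v (n : ℝ) ∧ v (2 * (n : ℝ)) < 0 := by
  have hn_pos : (0 : ℝ) < n := Nat.cast_pos.2 (two_pos.trans_le hn)
  exact kummer_sign_change_general four_pos one_lt_two hn_pos hv (fun ξ hξ ↦ hode ξ hξ.le)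
    (hv0 ▸ one_pos)
end

section
/- Let n ≥ 2 be an integer and λ a real with −(25n − 6)/(30√n) ≤ λ < 0. Let f be the maximal solution of the profile ODE f''(r)/(1 + f'(r)²) = (r − (n−1)/r)·f'(r) − f(r) − λ·√(1 + f'(r)²) on [0, r_*) with f(0) > −λ and f'(0) = 0, so that f'' < 0 and f' < 0 on (0, r_*). Set h(r) = f(r) + λ. If there exists r₀ ∈ [√n, r_*) with h(r₀) = 0, then h(r) > (30n/r)·h'(r) for all r ∈ [r₀, r_*). -/
open Real Set

/-- The profile ODE (2.7): `f''/(1+f'²) = (r - (n-1)/r) f' - f - λ √(1+f'²)` at the point `r`. -/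
def ProfileEq (n : ℕ) (lam : ℝ) (f : ℝ → ℝ) (r : ℝ) : Prop :=
  deriv (deriv f) r / (1 + (deriv f r) ^ 2) =
    (r - ((n : ℝ) - 1) / r) * deriv f r - f r - lam * Real.sqrt (1 + (deriv f r) ^ 2)

/-!
Write `h = f + λ`, `φ(r) = r h(r) - 30 n h'(r)` and `c = (25n - 6)/(30√n)`. Since `φ(r₀) > 0`, it
is enough that `φ' > 0` at every zero `r` of `φ` in `[r₀, r_*)`. At such a zero the concavity bound
`(r - √n) h'(r) < h(r) = 30 n h'(r) / r` forces `r (r - √n) > 30 n`, that is `r > 6√n`. The equation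
and `λ ≥ -c` then bound `h''` from above, giving `r φ'(r) ≥ -h'(r) Q(r)` for a
quadratic `Q`; the constant `c` is the one for which `6√n` is the positive root of `Q`, so the
right-hand side is positive.
-/

theorem pos_of_deriv_pos_of_eq_zero {φ : ℝ → ℝ} {a b : ℝ} (hab : a ≤ b)
    (hφ : ContinuousOn φ (Icc a b)) (ha : 0 < φ a)
    (hzero : ∀ x ∈ Icc a b, φ x = 0 → 0 < deriv φ x) : 0 < φ b := by
  have exists_zero : ∀ x ∈ Icc a b, φ x ≤ 0 → ∃ z ∈ Icc a x, φ z = 0 := fun x hx hφx =>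
    intermediate_value_Icc' hx.1 (hφ.mono (Icc_subset_Icc_right hx.2)) ⟨hφx, ha.le⟩
  by_contra! hb
  have zeros_compact : IsCompact (Icc a b ∩ φ ⁻¹' {0}) :=
    isCompact_Icc.of_isClosed_subset
      (hφ.preimage_isClosed_of_isClosed isClosed_Icc isClosed_singleton) inter_subset_left
  obtain ⟨z, ⟨hz, hφz : φ z = 0⟩, z_le⟩ :=
    zeros_compact.exists_isLeast (exists_zero b ⟨hab, le_rfl⟩ hb)
  have haz : a < z := hz.1.lt_of_ne (by rintro rfl; exact ha.ne' hφz)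
  have sign_near := eventually_nhdsWithin_sign_eq_of_deriv_pos (hzero z hz hφz) hφz
  obtain ⟨x, hsign, hax, hxz⟩ :=
    ((sign_near.filter_mono nhdsWithin_le_nhds).and (Ioo_mem_nhdsLT haz)).exists
  have hφx : φ x < 0 := by
    rwa [sign_neg (sub_neg.2 hxz), sign_eq_neg_one_iff] at hsign
  obtain ⟨y, hy, hφy⟩ := exists_zero x ⟨hax.le, hxz.le.trans hz.2⟩ hφx.le
  exact (hy.2.trans_lt hxz).not_ge (z_le ⟨⟨hy.1, hy.2.trans (hxz.le.trans hz.2)⟩, hφy⟩)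

theorem deriv_mul_sub_lt_of_deriv2_neg {f : ℝ → ℝ} {a b : ℝ} (hab : a < b)
    (hf : ContinuousOn f (Icc a b)) (hfb : DifferentiableAt ℝ f b)
    (hf'' : ∀ x ∈ Ioo a b, deriv (deriv f) x < 0) : deriv f b * (b - a) < f b - f a := by
  have hconcave : StrictConcaveOn ℝ (Icc a b) f :=
    strictConcaveOn_of_deriv2_neg (convex_Icc a b) hf (by simpa using hf'')
  have hslope := hconcave.deriv_lt_slope (left_mem_Icc.2 hab.le) (right_mem_Icc.2 hab.le) hab
    hfb
  rwa [slope_def_field, lt_div_iff₀ (sub_pos.2 hab)] at hslope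

/-- The constant `c = (25n - 6)/(30√n)`, for which the lower bound on `h` assumes `-c ≤ λ`. -/
noncomputable def lamBound (n : ℝ) : ℝ :=
  (25 * n - 6) / (30 * √n)

theorem lamBound_nonneg {n : ℝ} (hn : 6 / 25 ≤ n) : 0 ≤ lamBound n :=
  div_nonneg (by linarith) (by positivity)

/-- The quadratic `Q(r) = 30 n (r² - (31 n - 1) - c r) - (30 n + r²)`, which controls the derivative
of the comparison function `φ` at its zeros through `r φ'(r) ≥ -h'(r) Q(r)`. -/
noncomputable def criticalQuadratic (n r : ℝ) : ℝ :=
  30 * n * (r ^ 2 - (31 * n - 1) - lamBound n * r) - (30 * n + r ^ 2)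

theorem criticalQuadratic_eq_mul {n : ℝ} (hn : 0 < n) (r : ℝ) :
    criticalQuadratic n r = (r - 6 * √n) * ((30 * n - 1) * r + 155 * n * √n) := by
  have hsq : √n ^ 2 = n := sq_sqrt hn.le
  have hlam : 30 * n * lamBound n = √n * (25 * n - 6) := by
    rw [lamBound]
    field_simp
    rw [hsq, mul_comm]
  rw [criticalQuadratic]
  linear_combination -r * hlam + 930 * n * hsq

theorem criticalQuadratic_pos {n r : ℝ} (hn : 1 / 30 ≤ n) (hr : 6 * √n < r) :
    0 < criticalQuadratic n r := by
  have hn' : 0 < n := by linarith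
  have hs : 0 < √n := sqrt_pos.2 hn'
  have hr' : 0 ≤ r := by linarith
  rw [criticalQuadratic_eq_mul hn']
  exact mul_pos (sub_pos.2 hr)
    (add_pos_of_nonneg_of_pos (mul_nonneg (by linarith) hr') (by positivity))

/-- The comparison function `φ(r) = r h(r) - 30 n h'(r)` of the shifted profile `h = f + λ`; it is
the difference of the two sides of the lower bound, multiplied by `r` to clear the denominator. -/
noncomputable def comparison (n lam : ℝ) (f : ℝ → ℝ) (r : ℝ) : ℝ :=
  r * (f r + lam) - 30 * n * deriv f r

section Comparison

variable {n lam r : ℝ} {f : ℝ → ℝ}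

theorem comparison_pos_iff (hr : 0 < r) :
    0 < comparison n lam f r ↔ 30 * n / r * deriv f r < f r + lam := by
  rw [comparison, sub_pos, div_mul_eq_mul_div, div_lt_iff₀' hr]

theorem hasDerivAt_comparison (hf : DifferentiableAt ℝ f r)
    (hf' : DifferentiableAt ℝ (deriv f) r) :
    HasDerivAt (comparison n lam f)
      (f r + lam + r * deriv f r - 30 * n * deriv (deriv f) r) r :=
  (((hasDerivAt_id r).mul (hf.hasDerivAt.add_const lam)).sub
    (hf'.hasDerivAt.const_mul (30 * n))).congr_deriv (by simp)

theorem six_mul_sqrt_lt_of_comparison_eq_zero {r₀ : ℝ} (hn : 0 ≤ n) (hr₀ : √n ≤ r₀)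
    (hr : 0 < r) (hf' : deriv f r < 0) (hh₀ : 0 ≤ f r₀ + lam)
    (htangent : deriv f r * (r - r₀) < f r - f r₀) (hzero : comparison n lam f r = 0) :
    6 * √n < r := by
  have hh : deriv f r * (r - √n) < f r + lam := calc
    deriv f r * (r - √n) ≤ deriv f r * (r - r₀) :=
      mul_le_mul_of_nonpos_left (by linarith) hf'.le
    _ < f r + lam := by linarith
  have hprod : deriv f r * (r * (r - √n)) < deriv f r * (30 * n) := calc
    deriv f r * (r * (r - √n)) = r * (deriv f r * (r - √n)) := by ring
    _ < r * (f r + lam) := by gcongr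
    _ = deriv f r * (30 * n) := by rw [comparison] at hzero; linarith
  have hquad : 30 * n < r * (r - √n) := lt_of_mul_lt_mul_of_nonpos_left hprod hf'.le
  have hfactor : 0 < (r - 6 * √n) * (r + 5 * √n) := by linarith [sq_sqrt hn]
  exact sub_pos.1 (pos_of_mul_pos_left hfactor (by positivity))

end Comparison

section Profile

variable {n : ℕ} {lam c r : ℝ} {f : ℝ → ℝ}

theorem ProfileEq.mul_deriv_deriv_le (h : ProfileEq n lam f r) (hr : 0 < r) (hc : 0 ≤ c)
    (hlam : -c ≤ lam) (hf' : deriv f r ≤ 0) (hf'' : deriv (deriv f) r ≤ 0) :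
    r * deriv (deriv f) r ≤ (r ^ 2 - (n - 1) - c * r) * deriv f r - r * (f r + lam) := by
  rw [ProfileEq] at h
  set p := deriv f r
  set d := deriv (deriv f) r
  set q := √(1 + p ^ 2)
  have hq : 1 ≤ q := by simp [q, sq_nonneg]
  have hqp : q ≤ 1 - p := by
    simpa [p, abs_of_nonpos hf', sub_eq_add_neg] using sqrt_one_add_norm_sq_le p
  have hd : d ≤ d / (1 + p ^ 2) := by
    rw [le_div_iff₀ (by positivity)]
    nlinarith [sq_nonneg p]
  have hforcing : lam * (1 - q) ≤ -c * p := calc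
    lam * (1 - q) ≤ -c * (1 - q) := mul_le_mul_of_nonpos_right hlam (by linarith)
    _ ≤ -c * p := mul_le_mul_of_nonpos_left (by linarith) (by linarith)
  calc
    r * d ≤ r * ((r - (n - 1) / r) * p - (f r + lam) + lam * (1 - q)) :=
      mul_le_mul_of_nonneg_left (hd.trans (by linarith)) hr.le
    _ ≤ r * ((r - (n - 1) / r) * p - (f r + lam) + -c * p) := by gcongr
    _ = (r ^ 2 - (n - 1) - c * r) * p - r * (f r + lam) := by field_simp; ring

theorem ProfileEq.deriv_comparison_pos (h : ProfileEq n lam f r) (hn : 1 ≤ n)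
    (hlam : -lamBound n ≤ lam) (hr : 6 * √n < r) (hf' : deriv f r < 0)
    (hf'' : deriv (deriv f) r < 0) (hzero : comparison n lam f r = 0) :
    0 < deriv (comparison n lam f) r := by
  have hn' : (1 : ℝ) ≤ n := by exact_mod_cast hn
  have hr' : 0 < r := lt_of_le_of_lt (by positivity) hr
  rw [(hasDerivAt_comparison (differentiableAt_of_deriv_ne_zero hf'.ne)
    (differentiableAt_of_deriv_ne_zero hf''.ne)).deriv]
  have hh : r * (f r + lam) = 30 * n * deriv f r := sub_eq_zero.1 hzero
  have hd := h.mul_deriv_deriv_le hr' (lamBound_nonneg (by linarith)) hlam hf'.le hf''.le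
  rw [hh] at hd
  refine pos_of_mul_pos_right ?_ hr'.le
  calc
    0 < -deriv f r * criticalQuadratic n r :=
      mul_pos (neg_pos.2 hf') (criticalQuadratic_pos (by linarith) hr)
    _ = 30 * n * deriv f r + r ^ 2 * deriv f r - 30 * n *
          ((r ^ 2 - (n - 1) - lamBound n * r) * deriv f r - 30 * n * deriv f r) := by
      rw [criticalQuadratic]; ring
    _ ≤ 30 * n * deriv f r + r ^ 2 * deriv f r - 30 * n * (r * deriv (deriv f) r) := by gcongr
    _ = r * (f r + lam + r * deriv f r - 30 * n * deriv (deriv f) r) := by rw [← hh]; ring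

theorem h_lower_bound_general (hn : 1 ≤ n) (hlam : -lamBound n ≤ lam) {r₀ rstar : ℝ}
    (hr₀ : √n ≤ r₀) (hh₀ : 0 ≤ f r₀ + lam)
    (hode : ∀ r ∈ Ico r₀ rstar, ProfileEq n lam f r)
    (hconc : ∀ r ∈ Ico r₀ rstar, deriv (deriv f) r < 0 ∧ deriv f r < 0) :
    ∀ r ∈ Ico r₀ rstar, 30 * n / r * deriv f r < f r + lam := by
  intro r hr
  have hr₀_pos : 0 < r₀ := lt_of_lt_of_le (by positivity) hr₀
  have hsub : Icc r₀ r ⊆ Ico r₀ rstar := Icc_subset_Ico_right hr.2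
  have hf : ∀ x ∈ Icc r₀ r, DifferentiableAt ℝ f x := fun x hx =>
    differentiableAt_of_deriv_ne_zero (hconc x (hsub hx)).2.ne
  have hf' : ∀ x ∈ Icc r₀ r, DifferentiableAt ℝ (deriv f) x := fun x hx =>
    differentiableAt_of_deriv_ne_zero (hconc x (hsub hx)).1.ne
  have hpos₀ : 0 < comparison n lam f r₀ := by
    rw [comparison_pos_iff hr₀_pos]
    exact (mul_neg_of_pos_of_neg (by positivity)
      (hconc r₀ (left_mem_Ico.2 (hr.1.trans_lt hr.2))).2).trans_le hh₀
  rw [← comparison_pos_iff (hr₀_pos.trans_le hr.1)]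
  refine pos_of_deriv_pos_of_eq_zero hr.1
    (fun x hx => (hasDerivAt_comparison (hf x hx) (hf' x hx)).continuousAt.continuousWithinAt)
    hpos₀ fun x hx hzero => ?_
  obtain ⟨hf''_neg, hf'_neg⟩ := hconc x (hsub hx)
  have hx₀ : r₀ < x := hx.1.lt_of_ne (by rintro rfl; exact hpos₀.ne' hzero)
  have htangent : deriv f x * (x - r₀) < f x - f r₀ :=
    deriv_mul_sub_lt_of_deriv2_neg hx₀
      (fun y hy => (hf y ⟨hy.1, hy.2.trans hx.2⟩).continuousAt.continuousWithinAt) (hf x hx)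
      fun y hy => (hconc y (hsub ⟨hy.1.le, hy.2.le.trans hx.2⟩)).1
  have hx6 := six_mul_sqrt_lt_of_comparison_eq_zero n.cast_nonneg hr₀ (hr₀_pos.trans hx₀) hf'_neg
    hh₀ htangent hzero
  exact (hode x (hsub hx)).deriv_comparison_pos hn hlam hx6 hf'_neg hf''_neg hzero

end Profile

/-- Lemma 3.3: for `-(25n-6)/(30√n) ≤ λ < 0`, if the solution of the profile ODE
(with `f(0) > -λ`, `f'(0) = 0`, strictly concave and decreasing on `(0, r_*)`)
has `h(r₀) = 0` for some `r₀ ∈ [√n, r_*)`, where `h = f + λ`, then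
`h(r) > (30n/r) h'(r)` on `[r₀, r_*)`. -/
theorem h_lower_bound
    (n : ℕ) (hn : 2 ≤ n) (lam : ℝ)
    (hlam₁ : -(25 * (n : ℝ) - 6) / (30 * Real.sqrt n) ≤ lam) (hlam₂ : lam < 0)
    (f : ℝ → ℝ) (rstar : ℝ) (hrstar : 0 < rstar)
    (hC1 : ContDiffOn ℝ 1 f (Ico 0 rstar))
    (hC2 : ContDiffOn ℝ 2 f (Ioo 0 rstar))
    (hode : ∀ r ∈ Ioo (0 : ℝ) rstar, ProfileEq n lam f r)
    (hf0 : f 0 > -lam) (hf0' : deriv f 0 = 0)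
    (hconc : ∀ r ∈ Ioo (0 : ℝ) rstar, deriv (deriv f) r < 0 ∧ deriv f r < 0)
    (r₀ : ℝ) (hr₀ : r₀ ∈ Ico (Real.sqrt n) rstar) (hh₀ : f r₀ + lam = 0) :
    ∀ r ∈ Ico r₀ rstar, f r + lam > (30 * (n : ℝ) / r) * deriv f r := by
  have hsub : Ico r₀ rstar ⊆ Ioo 0 rstar := fun x hx =>
    ⟨(lt_of_lt_of_le (by positivity) hr₀.1).trans_le hx.1, hx.2⟩
  exact h_lower_bound_general (by lia) (by rwa [lamBound, ← neg_div]) hr₀.1 hh₀.ge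
    (fun r hr => hode r (hsub hr)) fun r hr => hconc r (hsub hr)
end

section
/- Let n ≥ 2 be an integer and λ a real with −(23n + 4)/(28√n) ≤ λ < 0. Let r ≥ 7√n and suppose h is a real-valued function twice differentiable at r satisfying, at the point r: the equation h''/(1 + h'²) = (r − (n−1)/r)·h' − h + λ·(1 − √(1 + h'²)), together with h''(r) < 0, h'(r) ≤ −1, and h(r) > (30n/r)·h'(r). Then h''(r) < (1/4)·r·h'(r)³. -/
open Real Set

/-!
Write `p = h'(r) < 0`. Since `√(1 + p²) ≤ 1 - p`, every term of the equation is controlled by a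
multiple of `p`, which gives `h'' / (1 + p²) < C(r) p` with `C(r) = r - (31n - 1) / r + min λ 0`.
The function `C(r) - r / 4` is increasing in `r`, and the lower bound on `λ` says precisely that
it is nonnegative at `r = 7√n`. Hence `h'' < (r / 4) p (1 + p²) < (r / 4) p³`.
-/

lemma mul_one_sub_sqrt_one_add_sq_le_min_mul (lam : ℝ) {p : ℝ} (hp : p ≤ 0) :
    lam * (1 - √(1 + p ^ 2)) ≤ min lam 0 * p := by
  have one_le_sqrt_one_add_sq : 1 ≤ √(1 + p ^ 2) :=
    one_le_sqrt.mpr (by linarith [sq_nonneg p])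
  have sqrt_one_add_sq_le : √(1 + p ^ 2) ≤ 1 - p := by
    simpa [abs_of_nonpos hp, sub_eq_add_neg] using sqrt_one_add_norm_sq_le p
  calc lam * (1 - √(1 + p ^ 2))
      ≤ min lam 0 * (1 - √(1 + p ^ 2)) :=
        mul_le_mul_of_nonpos_right (min_le_left lam 0) (by linarith)
    _ ≤ min lam 0 * p := mul_le_mul_of_nonpos_left (by linarith) (min_le_right lam 0)

lemma lt_mul_cube_of_div_one_add_sq_eq {a b c lam y p q : ℝ} (hc : 0 ≤ c) (hp : p < 0)
    (hy : b * p < y) (hcoeff : c ≤ a - b + min lam 0)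
    (heq : q / (1 + p ^ 2) = a * p - y + lam * (1 - √(1 + p ^ 2))) :
    q < c * p ^ 3 := by
  have div_lt : q / (1 + p ^ 2) < c * p :=
    calc q / (1 + p ^ 2)
        = a * p - y + lam * (1 - √(1 + p ^ 2)) := heq
      _ < a * p - b * p + min lam 0 * p := by
        linarith [mul_one_sub_sqrt_one_add_sq_le_min_mul lam hp.le]
      _ = (a - b + min lam 0) * p := by ring
      _ ≤ c * p := mul_le_mul_of_nonpos_right hcoeff hp.le
  calc q < c * p * (1 + p ^ 2) := (div_lt_iff₀ (by positivity)).mp div_lt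
    _ = c * p ^ 3 + c * p := by ring
    _ ≤ c * p ^ 3 := add_le_of_nonpos_right (mul_nonpos_of_nonneg_of_nonpos hc hp.le)

lemma div_sqrt_le_three_quarters_mul_sub_div {n r : ℝ} (hn : 1 ≤ 31 * n) (hr : 7 * √n ≤ r) :
    (23 * n + 4) / (28 * √n) ≤ 3 / 4 * r - (31 * n - 1) / r := by
  have sqrt_n_pos : 0 < √n := sqrt_pos.mpr (by linarith)
  calc (23 * n + 4) / (28 * √n)
      = 3 / 4 * (7 * √n) - (31 * n - 1) / (7 * √n) := by
        field_simp
        rw [sq_sqrt (by linarith)]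
        ring
    _ ≤ 3 / 4 * r - (31 * n - 1) / r := by gcongr

lemma quarter_mul_le_sub_div_add_min {n r lam : ℝ} (hn : 1 ≤ 31 * n) (hr : 7 * √n ≤ r)
    (hlam : -(23 * n + 4) / (28 * √n) ≤ lam) :
    1 / 4 * r ≤ r - (n - 1) / r - 30 * n / r + min lam 0 := by
  have neg_le_min : -((23 * n + 4) / (28 * √n)) ≤ min lam 0 :=
    le_min (by rwa [← neg_div]) (neg_nonpos.mpr (div_nonneg (by linarith) (by positivity)))
  have div_eq_add_div : (31 * n - 1) / r = (n - 1) / r + 30 * n / r := by ring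
  linarith [div_sqrt_le_three_quarters_mul_sub_div hn hr]

theorem pointwise_second_derivative_bound_general
    {n lam r : ℝ} (hn : 1 ≤ 31 * n) (hlam : -(23 * n + 4) / (28 * √n) ≤ lam)
    (hr : 7 * √n ≤ r) {h : ℝ → ℝ}
    (_hd1 : DifferentiableAt ℝ h r) (_hd2 : DifferentiableAt ℝ (deriv h) r)
    (heq : deriv (deriv h) r / (1 + (deriv h r) ^ 2) =
      (r - (n - 1) / r) * deriv h r - h r + lam * (1 - √(1 + (deriv h r) ^ 2)))
    (hslope : deriv h r < 0) (hbound : 30 * n / r * deriv h r < h r) :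
    deriv (deriv h) r < 1 / 4 * r * (deriv h r) ^ 3 := by
  have r_nonneg : 0 ≤ r := (by positivity : 0 ≤ 7 * √n).trans hr
  exact lt_mul_cube_of_div_one_add_sq_eq (by positivity) hslope hbound
    (quarter_mul_le_sub_div_add_min hn hr hlam) heq

/-- A pointwise differential inequality from the proof of Proposition 3.1: for
`-(23n+4)/(28√n) ≤ λ < 0` and `r ≥ 7√n`, if `h` satisfies the shifted profile equation
`h''/(1+h'²) = (r - (n-1)/r) h' - h + λ(1 - √(1+h'²))` at `r` with `h''(r) < 0`,
`h'(r) ≤ -1` and `h(r) > (30n/r) h'(r)`, then `h''(r) < (1/4) r h'(r)³`. -/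
theorem pointwise_second_derivative_bound
    (n : ℕ) (hn : 2 ≤ n) (lam : ℝ)
    (hlam₁ : -(23 * (n : ℝ) + 4) / (28 * Real.sqrt n) ≤ lam) (hlam₂ : lam < 0)
    (r : ℝ) (hr : 7 * Real.sqrt n ≤ r)
    (h : ℝ → ℝ)
    (hd1 : DifferentiableAt ℝ h r) (hd2 : DifferentiableAt ℝ (deriv h) r)
    (heq : deriv (deriv h) r / (1 + (deriv h r) ^ 2) =
      (r - ((n : ℝ) - 1) / r) * deriv h r - h r
        + lam * (1 - Real.sqrt (1 + (deriv h r) ^ 2)))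
    (hconc : deriv (deriv h) r < 0)
    (hslope : deriv h r ≤ -1)
    (hbound : h r > (30 * (n : ℝ) / r) * deriv h r) :
    deriv (deriv h) r < (1 / 4) * r * (deriv h r) ^ 3 := by
  have one_le_mul : (1 : ℝ) ≤ 31 * n := by norm_cast; lia
  exact pointwise_second_derivative_bound_general one_le_mul hlam₁ hr hd1 hd2 heq
    (by linarith) hbound
end

section
/- Let 0 < a < b < ∞ and let g : [a, b) → ℝ be differentiable with g(r) < 0 and g'(r) ≤ (1/4)·r·g(r)³ for all r ∈ [a, b), and suppose g(r) → −∞ as r → b⁻. Then g(r)² ≤ 4/(b² − r²) for all r ∈ [a, b); in particular g(r) ≥ −2/√(b² − r²) on [a, b). -/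
open Real Set Filter

/-!
Separation of variables: if `u > 0` and `u' ≥ K' * u ^ (p + 1)`, then `u ^ (-p) + p * K` is
nonincreasing. Since `u ^ (-p)` vanishes where `u` blows up, comparing its values at `r` and at the
blow-up point `b` gives `p * (K b - K r) ≤ u r ^ (-p)`. The gradient bound is the case `u = -g`,
`p = 2`, `K r = r ^ 2 / 8`.
-/

open scoped Topology

theorem le_of_antitoneOn_Ico_of_tendsto {α β : Type*} [LinearOrder α] [DenselyOrdered α]
    [TopologicalSpace α] [OrderTopology α] [Preorder β] [TopologicalSpace β]
    [ClosedIicTopology β] {f : α → β} {a b r : α} {l : β} (hf : AntitoneOn f (Ico a b))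
    (hl : Tendsto f (𝓝[<] b) (𝓝 l)) (hr : r ∈ Ico a b) : l ≤ f r := by
  have : (𝓝[<] b).NeBot := nhdsLT_neBot_of_exists_lt ⟨r, hr.2⟩
  apply le_of_tendsto hl
  filter_upwards [Ioo_mem_nhdsLT hr.2] with x hx
  exact hf hr ⟨hr.1.trans hx.1.le, hx.2⟩ hx.1.le

section SeparationOfVariables

variable {p : ℝ} {u u' K K' : ℝ → ℝ}

theorem antitoneOn_rpow_neg_add_mul {s : Set ℝ} (hs : Convex ℝ s) (hp : 0 ≤ p)
    (hu : ContinuousOn u s) (hK : ContinuousOn K s)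
    (hu' : ∀ x ∈ interior s, HasDerivAt u (u' x) x)
    (hK' : ∀ x ∈ interior s, HasDerivAt K (K' x) x)
    (hpos : ∀ x ∈ s, 0 < u x) (hle : ∀ x ∈ interior s, K' x * u x ^ (p + 1) ≤ u' x) :
    AntitoneOn (fun x ↦ u x ^ (-p) + p * K x) s := by
  refine antitoneOn_of_hasDerivWithinAt_nonpos hs
    (f' := fun x ↦ u' x * -p * u x ^ (-p - 1) + p * K' x)
    ((hu.rpow_const fun x hx ↦ .inl (hpos x hx).ne').add (hK.const_mul p))
    (fun x hx ↦ ?_) fun x hx ↦ ?_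
  · have hux : u x ≠ 0 := (hpos x (interior_subset hx)).ne'
    exact (((hu' x hx).rpow_const (.inl hux)).add ((hK' x hx).const_mul p)).hasDerivWithinAt
  · have hux : 0 < u x := hpos x (interior_subset hx)
    have hseparated : K' x ≤ u' x * u x ^ (-p - 1) := by
      calc K' x = K' x * u x ^ (p + 1) * u x ^ (-p - 1) := by
            rw [mul_assoc, ← rpow_add hux, show p + 1 + (-p - 1) = 0 by ring, rpow_zero, mul_one]
        _ ≤ u' x * u x ^ (-p - 1) := by gcongr; exact hle x hx
    linarith [mul_le_mul_of_nonneg_left hseparated hp]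

theorem mul_sub_le_rpow_neg_of_tendsto_atTop {a b r l : ℝ} (hp : 0 < p)
    (hu : ContinuousOn u (Ico a b)) (hK : ContinuousOn K (Ico a b))
    (hu' : ∀ x ∈ Ioo a b, HasDerivAt u (u' x) x)
    (hK' : ∀ x ∈ Ioo a b, HasDerivAt K (K' x) x)
    (hpos : ∀ x ∈ Ico a b, 0 < u x) (hle : ∀ x ∈ Ioo a b, K' x * u x ^ (p + 1) ≤ u' x)
    (hblow : Tendsto u (𝓝[<] b) atTop) (hl : Tendsto K (𝓝[<] b) (𝓝 l)) (hr : r ∈ Ico a b) :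
    p * (l - K r) ≤ u r ^ (-p) := by
  rw [← interior_Ico] at hu' hK' hle
  have hanti := antitoneOn_rpow_neg_add_mul (convex_Ico a b) hp.le hu hK hu' hK' hpos hle
  have hlim : Tendsto (fun x ↦ u x ^ (-p) + p * K x) (𝓝[<] b) (𝓝 (0 + p * l)) :=
    ((tendsto_rpow_neg_atTop hp).comp hblow).add (hl.const_mul p)
  linarith [le_of_antitoneOn_Ico_of_tendsto hanti hlim hr]

end SeparationOfVariables

theorem neg_div_sqrt_le_of_sq_le {x c d : ℝ} (hc : 0 ≤ c) (h : x ^ 2 ≤ c ^ 2 / d) :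
    -c / √d ≤ x := by
  simpa only [sqrt_div (sq_nonneg c), sqrt_sq hc, neg_div] using neg_sqrt_le_of_sq_le h

theorem gradient_bound_before_blow_up_general {a b : ℝ} {g g' : ℝ → ℝ} (hab : -b < a)
    (hcont : ContinuousOn g (Ico a b)) (hderiv : ∀ r ∈ Ioo a b, HasDerivAt g (g' r) r)
    (hneg : ∀ r ∈ Ico a b, g r < 0) (hineq : ∀ r ∈ Ioo a b, g' r ≤ (1 / 4) * r * g r ^ 3)
    (hblow : Tendsto g (𝓝[<] b) atBot) :
    ∀ r ∈ Ico a b, g r ^ 2 ≤ 4 / (b ^ 2 - r ^ 2) ∧ g r ≥ -2 / √(b ^ 2 - r ^ 2) := by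
  intro r hr
  have hK : Continuous fun x : ℝ ↦ x ^ 2 / 8 := by fun_prop
  have hK' (x : ℝ) : HasDerivAt (fun x ↦ x ^ 2 / 8) (x / 4) x :=
    ((hasDerivAt_pow 2 x).div_const 8).congr_deriv (by ring)
  have hle : ∀ x ∈ Ioo a b, x / 4 * (-g x) ^ (2 + 1 : ℝ) ≤ -g' x := fun x hx ↦ by
    rw [show (2 + 1 : ℝ) = (3 : ℕ) by norm_num, rpow_natCast]
    linarith [hineq x hx]
  have hseparated : 2 * (b ^ 2 / 8 - r ^ 2 / 8) ≤ (-g r) ^ (-2 : ℝ) :=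
    mul_sub_le_rpow_neg_of_tendsto_atTop two_pos hcont.neg hK.continuousOn
      (fun x hx ↦ (hderiv x hx).neg) (fun x _ ↦ hK' x) (fun x hx ↦ neg_pos.2 (hneg x hx)) hle
      (tendsto_neg_atBot_atTop.comp hblow) (hK.continuousWithinAt (x := b)) hr
  have hsq : g r ^ 2 ≤ 4 / (b ^ 2 - r ^ 2) := by
    have hgr : 0 < g r ^ 2 := sq_pos_of_neg (hneg r hr)
    have hpos : 0 < b ^ 2 - r ^ 2 := sub_pos.2 (sq_lt_sq' (hab.trans_le hr.1) hr.2)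
    rw [rpow_neg (neg_pos.2 (hneg r hr)).le, rpow_two, neg_sq, ← one_div,
      le_div_iff₀ hgr] at hseparated
    rw [le_div_iff₀ hpos]
    linarith
  exact ⟨hsq, neg_div_sqrt_le_of_sq_le two_pos.le (hsq.trans_eq (by norm_num))⟩

/-- A calculus lemma from the proof of Proposition 3.1: if `g < 0` is differentiable
on `[a, b)`, satisfies `g' ≤ (1/4) r g³`, and `g(r) → -∞` as `r → b⁻`, then
`g(r)² ≤ 4/(b² - r²)`, hence `g(r) ≥ -2/√(b² - r²)`, on `[a, b)`. -/
theorem gradient_bound_before_blow_up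
    (a b : ℝ) (ha : 0 < a) (hab : a < b)
    (g : ℝ → ℝ)
    (hdiff : ∀ r ∈ Ico a b, DifferentiableAt ℝ g r)
    (hneg : ∀ r ∈ Ico a b, g r < 0)
    (hineq : ∀ r ∈ Ico a b, deriv g r ≤ (1 / 4) * r * (g r) ^ 3)
    (hblow : Tendsto g (nhdsWithin b (Iio b)) atBot) :
    ∀ r ∈ Ico a b, (g r) ^ 2 ≤ 4 / (b ^ 2 - r ^ 2) ∧
      g r ≥ -2 / Real.sqrt (b ^ 2 - r ^ 2) :=
  gradient_bound_before_blow_up_general (by linarith)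
    (fun r hr ↦ (hdiff r hr).continuousAt.continuousWithinAt)
    (fun r hr ↦ (hdiff r (Ioo_subset_Ico_self hr)).hasDerivAt) hneg
    (fun r hr ↦ hineq r (Ioo_subset_Ico_self hr)) hblow
end
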